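/- arXiv:2105.08406 — 5 statements merged into one kernel-verified Lean document; each statement's English description precedes it below -/
import Mathlib

section
/- Every set of 1717 points in the plane in general position contains 9 points in convex position; that is, g⁽²⁾(9) ≤ C(13,7)+1 = 1717. -/
/-!
Suppose `S` contains no convex `n`-gon, where `6 ≤ n`. Fix a vertex `x` of the convex hull of `S`
and sort the other points by angle about `x`. Under a projective map sending `x` to vertical
infinity this becomes the left-to-right order, so one may speak of cups (left turns) and caps (right
turns). Apart from the polygons below, only one fact about orientations is needed: they form a
*signotope*.

A convex `n`-gon arises from an `n`-cup, from an `(n - 1)`-cap together with `x`, and from an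
`(n - 1)`-cup together with a point above the chord joining its ends. Excluding the first two, the
Erdős–Szekeres cup-cap bound allows `C(2n - 5, n - 2)` points besides `x`. The third gives the
saving. Let `X` be the set of left ends of `(n - 2)`-caps and `Y ⊆ X` the set of right ends of
`(n - 2)`-cups inside `X`. Then

* the complement of `X` has no `n`-cup and no `(n - 2)`-cap, hence at most `C(2n - 6, n - 2)`
  points;
* `X \ Y` has no `(n - 2)`-cup and no `(n - 1)`-cap, hence at most `C(2n - 7, n - 4)` points;
* `Y` has no `(n - 2)`-cap, by the usual extension argument, and no `(n - 2)`-cup, which is where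
  the third kind of `n`-gon enters; hence at most `C(2n - 8, n - 4)` points.

By Pascal's rule these numbers add up to `C(2n - 5, n - 2) - C(2n - 8, n - 3)`.
-/

/-- A finite set `S` of points in `ℝ^d` is in *general position* if every
`(d+1)`-element subset of `S` is affinely independent. -/
def InGeneralPosition (d : ℕ) (S : Finset (Fin d → ℝ)) : Prop :=
  ∀ T ⊆ S, T.card = d + 1 → AffineIndependent ℝ ((↑) : T → (Fin d → ℝ))

/-- A finite set of points is in *convex position* if no point of the set lies in
the convex hull of the other points of the set. -/
def InConvexPosition (d : ℕ) (X : Finset (Fin d → ℝ)) : Prop :=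
  ∀ p ∈ X, p ∉ convexHull ℝ (↑(X.erase p) : Set (Fin d → ℝ))

/-- A *k-hole* in `S` is a `k`-element subset `X ⊆ S` in convex position such that
no point of `S \ X` lies in the convex hull of `X`. -/
def IsHole (d k : ℕ) (S X : Finset (Fin d → ℝ)) : Prop :=
  X ⊆ S ∧ X.card = k ∧ InConvexPosition d X ∧
    ∀ p ∈ S, p ∉ X → p ∉ convexHull ℝ (↑X : Set (Fin d → ℝ))

namespace CupCap

/-! ### Cups and caps -/

section Cup

/-- A *`T`-cup*: a strictly increasing list any three consecutive members of which satisfy the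
ternary relation `T`. For `T a b c` saying that `a, b, c` turn to the left this is a cup in the
sense of Erdős and Szekeres. For a signotope, all triples of the list then satisfy `T`, see
`IsCup.triplewise`. -/
def IsCup {α : Type*} [LT α] (T : α → α → α → Prop) : List α → Prop
  | a :: b :: c :: l => a < b ∧ T a b c ∧ IsCup T (b :: c :: l)
  | [a, b] => a < b
  | _ => True

/-- A *`T`-cap*: a cup for the complementary relation. -/
abbrev IsCap {α : Type*} [LT α] (T : α → α → α → Prop) : List α → Prop :=
  IsCup Tᶜ

/-- A *signotope* of rank three: along the four triples of `a < b < c < d`, taken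
lexicographically, the relation `T` changes its truth value at most once. -/
def IsSignotope {α : Type*} [LT α] (T : α → α → α → Prop) : Prop :=
  ∀ ⦃a b c d⦄, a < b → b < c → c < d →
    ((T a b c → T a b d) ∧ (T a b d → T a c d) ∧ (T a c d → T b c d)) ∨
    ((T b c d → T a c d) ∧ (T a c d → T a b d) ∧ (T a b d → T a b c))

variable {α : Type*} [Preorder α] {T : α → α → α → Prop} {a b c d : α} {l l' : List α}

theorem IsSignotope.compl (hT : IsSignotope T) : IsSignotope Tᶜ := fun a b c d hab hbc hcd => by
  have := hT hab hbc hcd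
  simp only [Pi.compl_apply, compl_iff_not]
  tauto

namespace IsCup

theorem of_cons (h : IsCup T (a :: l)) : IsCup T l := by
  match l, h with
  | [], _ => trivial
  | [_], _ => trivial
  | _ :: _ :: _, h => exact h.2.2

theorem lt (h : IsCup T (a :: b :: l)) : a < b := by
  match l, h with
  | [], h => exact h
  | _ :: _, h => exact h.1

theorem right_of_append : ∀ {l}, IsCup T (l ++ l') → IsCup T l'
  | [], h => h
  | _ :: _, h => right_of_append (of_cons h)

theorem isChain : ∀ {l}, IsCup T l → l.IsChain (· < ·)
  | [], _ => .nil
  | [_], _ => .singleton _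
  | _ :: _ :: _, h => .cons_cons h.lt h.of_cons.isChain

theorem pairwise (h : IsCup T l) : l.Pairwise (· < ·) :=
  h.isChain.pairwise

theorem append_overlap : ∀ {l}, IsCup T (l ++ [a, b]) → IsCup T (a :: b :: l') →
    IsCup T (l ++ a :: b :: l')
  | [], _, h' => h'
  | [_], h, h' => ⟨h.1, h.2.1, h'⟩
  | [_, y], h, h' => ⟨h.1, h.2.1, append_overlap (l := [y]) h.2.2 h'⟩
  | _ :: y :: z :: l, h, h' => ⟨h.1, h.2.1, append_overlap (l := y :: z :: l) h.2.2 h'⟩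

theorem concat (h : IsCup T (l ++ [a, b])) (hbc : b < c) (hT : T a b c) :
    IsCup T (l ++ [a, b, c]) :=
  h.append_overlap ⟨h.right_of_append.lt, hT, hbc⟩

theorem cons_concat {x : α} (h : IsCup T (x :: (l ++ [a, b]))) (hbc : b < c) (hT : T a b c) :
    IsCup T (x :: (l ++ [a, b, c])) :=
  concat (l := x :: l) h hbc hT

theorem triplewise (hT : IsSignotope T) : ∀ {l}, IsCup T l → l.Triplewise T
  | [], _ => .nil
  | [_], _ => List.triplewise_singleton _ _
  | [_, _], _ => List.triplewise_pair _ _ _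
  | a :: b :: c :: l, ⟨hab, habc, h⟩ => by
    have triples := h.triplewise hT
    have ⟨hbl, hl⟩ := List.pairwise_cons.1 h.pairwise
    have hb := (List.triplewise_cons.1 triples).1
    have hTab : ∀ x ∈ c :: l, T a b x := by
      rintro x (_ | ⟨_, hx⟩)
      · exact habc
      · have hcx := (List.pairwise_cons.1 hl).1 x hx
        have hTbcx := (List.pairwise_cons.1 hb).1 x hx
        have := hT hab (hbl c (by simp)) hcx
        tauto
    have hTa : (c :: l).Pairwise (T a) := (hl.and hb).imp_of_mem fun {x y} hx _ ⟨hxy, _⟩ => by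
      have := hT hab (hbl x hx) hxy
      have := hTab x hx
      tauto
    exact List.triplewise_cons.2 ⟨List.pairwise_cons.2 ⟨hTab, hTa⟩, triples⟩

theorem turn_of_cons_concat {x : α} (hT : IsSignotope T) (h : IsCup T (x :: (l ++ [a, b])))
    (hbc : b < c) (habc : T a b c) : T x b c := by
  have hx := (List.triplewise_cons.1 ((h.cons_concat hbc habc).triplewise hT)).1
  have hsub : [b, c].Sublist (l ++ [a, b, c]) := by simp
  exact List.pairwise_pair.1 (hx.sublist hsub)

end IsCup

end Cup

/-! ### The Erdős–Szekeres bound -/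

section ErdosSzekeres

variable {α : Type*} {T : α → α → α → Prop} {Q : Finset α} {k l : ℕ}

/-- The set `Q` contains no `T`-cup with `k` members. -/
def CupFreeOn [LT α] (T : α → α → α → Prop) (Q : Finset α) (k : ℕ) : Prop :=
  ∀ L : List α, IsCup T L → (∀ x ∈ L, x ∈ Q) → L.length ≠ k

/-- The point `x` is the right end of a `T`-cup with `k + 1` members, all of them in `Q`. -/
def IsCupEnd [LT α] (T : α → α → α → Prop) (Q : Finset α) (k : ℕ) (x : α) : Prop :=
  ∃ L : List α, IsCup T (L ++ [x]) ∧ (∀ y ∈ L ++ [x], y ∈ Q) ∧ L.length = k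

/-- The point `x` is the left end of a `T`-cup with `k + 1` members. -/
def IsCupStart [LT α] (T : α → α → α → Prop) (k : ℕ) (x : α) : Prop :=
  ∃ L : List α, IsCup T (x :: L) ∧ L.length = k

theorem CupFreeOn.mono [LT α] {Q' : Finset α} (h : CupFreeOn T Q k) (hQ : Q' ⊆ Q) :
    CupFreeOn T Q' k :=
  fun L hL hLQ => h L hL fun x hx => hQ (hLQ x hx)

theorem cupFreeOn_filter_not_isCupEnd [LT α] (T : α → α → α → Prop) (Q : Finset α) (k : ℕ)
    [DecidablePred (IsCupEnd T Q k)] : CupFreeOn T {x ∈ Q | ¬IsCupEnd T Q k x} (k + 1) := by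
  intro L hL hLQ hlen
  obtain ⟨L, x, rfl⟩ := (List.eq_nil_or_concat' L).resolve_left
    (List.ne_nil_of_length_eq_add_one hlen)
  exact (Finset.mem_filter.1 (hLQ x (by simp))).2
    ⟨L, hL, fun y hy => (Finset.mem_filter.1 (hLQ y hy)).1, by simpa using hlen⟩

theorem cupFreeOn_filter_not_isCupStart [LT α] (T : α → α → α → Prop) (Q : Finset α) (k : ℕ)
    [DecidablePred (IsCupStart T k)] : CupFreeOn T {x ∈ Q | ¬IsCupStart T k x} (k + 1) := by
  intro L hL hLQ hlen
  match L, hlen with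
  | x :: L, hlen =>
    exact (Finset.mem_filter.1 (hLQ x (by simp))).2 ⟨L, hL, by simpa using hlen⟩

theorem IsCupStart.exists_cup [LT α] {x : α} (h : IsCupStart T (k + 2) x) :
    ∃ v w L, IsCup T (x :: v :: w :: L) ∧ L.length = k := by
  obtain ⟨L, hL, hlen⟩ := h
  match L, hlen with
  | v :: w :: L, hlen => exact ⟨v, w, L, hL, by simpa using hlen⟩

theorem IsCupEnd.exists_cup [LT α] {x : α} (h : IsCupEnd T Q (k + 1) x) :
    ∃ L p, IsCup T (L ++ [p, x]) ∧ (∀ y ∈ L ++ [p, x], y ∈ Q) ∧ L.length = k := by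
  obtain ⟨L, hL, hLQ, hlen⟩ := h
  obtain ⟨L, p, rfl⟩ := (List.eq_nil_or_concat' L).resolve_left
    (List.ne_nil_of_length_eq_add_one hlen)
  exact ⟨L, p, by simpa using hL, by simpa using hLQ, by simpa using hlen⟩

/- A cap of right ends of cups can be extended to the left by the penultimate member of a cup
ending in its first member, unless that cup extends to the right by the second member of the cap. -/
theorem CupFreeOn.compl_filter_isCupEnd [Preorder α] [DecidablePred (IsCupEnd T Q (k + 1))]
    (hcup : CupFreeOn T Q (k + 3)) (hcap : CupFreeOn Tᶜ Q (l + 3)) :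
    CupFreeOn Tᶜ {x ∈ Q | IsCupEnd T Q (k + 1) x} (l + 2) := by
  intro L hL hLQ hlen
  match L, hlen with
  | u :: v :: L, hlen =>
    have hLQ' : ∀ x ∈ u :: v :: L, x ∈ Q := fun x hx => (Finset.mem_filter.1 (hLQ x hx)).1
    obtain ⟨C, p, hC, hCQ, hClen⟩ := (Finset.mem_filter.1 (hLQ u (by simp))).2.exists_cup
    by_cases huv : T p u v
    · refine hcup _ (hC.concat hL.lt huv) ?_ (by simp [hClen])
      simp only [List.mem_append, List.mem_cons] at hCQ hLQ' ⊢
      grind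
    · refine hcap (p :: u :: v :: L) ⟨hC.right_of_append.lt, huv, hL⟩ ?_ (by simpa using hlen)
      exact List.forall_mem_cons.2 ⟨hCQ p (by simp), hLQ'⟩

theorem CupFreeOn.card_le_one [LinearOrder α] (h : CupFreeOn T Q 2) : Q.card ≤ 1 := by
  by_contra! hQ
  obtain ⟨a, ha, b, hb, hab⟩ := Finset.one_lt_card.1 hQ
  rcases hab.lt_or_gt with hab | hab
  · exact h [a, b] hab (by simp [ha, hb]) rfl
  · exact h [b, a] hab (by simp [ha, hb]) rfl

theorem card_le_choose_of_cupFreeOn [LinearOrder α] (hcup : CupFreeOn T Q (k + 2))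
    (hcap : CupFreeOn Tᶜ Q (l + 2)) : Q.card ≤ (k + l).choose k := by
  classical
  induction k generalizing l Q with
  | zero => simpa using hcup.card_le_one
  | succ k ihk =>
    induction l generalizing Q with
    | zero => simpa using hcap.card_le_one
    | succ l ihl =>
      have ends : Finset.card {x ∈ Q | IsCupEnd T Q (k + 1) x} ≤ (k + 1 + l).choose (k + 1) :=
        ihl (hcup.mono (Finset.filter_subset _ _)) (hcup.compl_filter_isCupEnd hcap)
      have others : Finset.card {x ∈ Q | ¬IsCupEnd T Q (k + 1) x} ≤ (k + (l + 1)).choose k :=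
        ihk (cupFreeOn_filter_not_isCupEnd T Q (k + 1)) (hcap.mono (Finset.filter_subset _ _))
      calc Q.card
          = Finset.card {x ∈ Q | IsCupEnd T Q (k + 1) x}
            + Finset.card {x ∈ Q | ¬IsCupEnd T Q (k + 1) x} :=
          (Finset.card_filter_add_card_filter_not _).symm
        _ ≤ (k + 1 + l).choose (k + 1) + (k + (l + 1)).choose k := add_le_add ends others
        _ = (k + 1 + (l + 1)).choose (k + 1) := by
          rw [← add_assoc (k + 1) l 1, Nat.choose_succ_succ', add_comm, add_right_comm k 1 l,
            add_assoc k l 1]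

end ErdosSzekeres

/-! ### Signotopes without convex polygons -/

section GonFree

/-- The combinatorial content of the absence of convex `n`-gons among points that, together with a
further point `x`, are in general position and are ordered by angle about `x`: there is no `n`-cup,
no `(n - 1)`-cap (which would form an `n`-gon with `x`), and no point above the chord joining the
ends of an `(n - 1)`-cup. -/
structure IsGonFree {α : Type*} [LT α] (T : α → α → α → Prop) (n : ℕ) : Prop where
  isSignotope : IsSignotope T
  length_ne_of_isCup {L : List α} : IsCup T L → L.length ≠ n
  length_ne_of_isCap {L : List α} : IsCap T L → L.length + 1 ≠ n
  below_chord {a z : α} {L : List α} : IsCup T (a :: (L ++ [z])) → L.length + 3 = n →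
    ∀ t, a < t → t < z → T a t z

namespace IsGonFree

variable {α : Type*} {T : α → α → α → Prop} {n : ℕ} {b c d p q v w w' y : α}
  {B C L W Y : List α}

section Preorder

variable [Preorder α]

theorem turn_of_isCap (h : IsGonFree T n) (hpb : p < b) (hL : IsCap T (b :: c :: L))
    (hlen : L.length + 4 = n) : T p b c := by
  by_contra hT
  exact h.length_ne_of_isCap (L := p :: b :: c :: L) ⟨hpb, hT, hL⟩ (by simpa using hlen)

theorem not_turn_of_isCup (h : IsGonFree T n) (hC : IsCup T (C ++ [p, b]))
    (hlen : C.length + 4 = n) (hbv : b < v) (hvw : v < w) (hT : T p b v) : ¬T b v w := fun hT' =>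
  h.length_ne_of_isCup (hC.append_overlap (l' := [v, w]) ⟨hC.right_of_append.lt, hT, hbv, hT', hvw⟩)
    (by simpa using hlen)

theorem below_chord_of_turn (h : IsGonFree T n) (hB : IsCup T (b :: (B ++ [c, d])))
    (hlen : B.length + 5 = n) (hdv : d < v) (hT : T c d v) (hbw : b < w) (hwv : w < v) :
    T b w v :=
  h.below_chord (L := B ++ [c, d])
    (by simpa using hB.cons_concat hdv hT) (by simpa using hlen) w hbw hwv

/- The first two members of a long cap turn upwards after any earlier point, and a long cup ending
in `b` cannot be prolonged by two such turns. -/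
theorem false_of_isCap_of_ends (h : IsGonFree T n) (hL : IsCap T (b :: c :: L))
    (hL_len : L.length + 4 = n) (hC : IsCup T (C ++ [p, b])) (hC_len : C.length + 4 = n)
    (hW : IsCap T (c :: w :: W)) (hW_len : W.length + 4 = n) : False :=
  h.not_turn_of_isCup hC hC_len hL.lt hW.lt
    (h.turn_of_isCap hC.right_of_append.lt hL hL_len) (h.turn_of_isCap hL.lt hW hW_len)

theorem false_of_lt (h : IsGonFree T n)
    (hB : IsCup T (b :: (B ++ [c, d]))) (hB_len : B.length + 5 = n)
    (hC : IsCup T (C ++ [p, b])) (hC_len : C.length + 4 = n)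
    (hW : IsCap T (b :: w :: W)) (hW_len : W.length + 4 = n)
    (hY : IsCap T (d :: y :: Y)) (hY_len : Y.length + 4 = n) (hwy : w < y) : False := by
  have hcd : c < d := (IsCup.right_of_append (l := b :: B) hB).lt
  have hpbw : T p b w := h.turn_of_isCap hC.right_of_append.lt hW hW_len
  have hcdy : T c d y := h.turn_of_isCap hcd hY hY_len
  exact h.not_turn_of_isCup hC hC_len hW.lt hwy hpbw
    (h.below_chord_of_turn hB hB_len hY.lt hcdy hW.lt hwy)

/- In the cap `b, w, w', W` the point `d` can replace `b`; dropping `w` from the result leaves room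
for `q` and `c` in front, which gives an `(n - 1)`-cap. -/
theorem false_of_eq (h : IsGonFree T n) (hn : 6 ≤ n)
    (hB : IsCup T (b :: (B ++ [c, d]))) (hB_len : B.length + 5 = n)
    (hC : IsCup T (C ++ [q, c])) (hC_len : C.length + 4 = n)
    (hW : IsCap T (b :: w :: w' :: W)) (hW_len : W.length + 5 = n)
    (hY : IsCap T (d :: w :: Y)) (hY_len : Y.length + 4 = n) : False := by
  match W, hW_len with
  | [], hW_len => simp at hW_len; omega
  | w'' :: W, hW_len =>
    have hbd : b < d := (List.pairwise_cons.1 hB.pairwise).1 d (by simp)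
    have hcd : c < d := (IsCup.right_of_append (l := b :: B) hB).lt
    have hdw : d < w := hY.lt
    have hww' : w < w' := hW.of_cons.lt
    have hw'w'' : w' < w'' := hW.of_cons.of_cons.lt
    have hbww' : ¬T b w w' := hW.2.1
    have hww'w'' : ¬T w w' w'' := hW.of_cons.2.1
    have hcdw : T c d w := h.turn_of_isCap hcd hY hY_len
    have hqcd : ¬T q c d := fun hT => h.not_turn_of_isCup hC hC_len hcd hdw hT hcdw
    have hcdw' : ¬T c d w' := fun hT =>
      hbww' (h.below_chord_of_turn hB hB_len (hdw.trans hww') hT hW.lt hww')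
    have hbdw : T b d w := hB.turn_of_cons_concat h.isSignotope hdw hcdw
    have hdw'w'' : ¬T d w' w'' := by
      have := h.isSignotope hbd hdw hww'
      have := h.isSignotope hdw hww' hw'w''
      tauto
    have hcap : IsCap T (q :: c :: d :: w' :: w'' :: W) :=
      ⟨hC.right_of_append.lt, hqcd, hcd, hcdw', hdw.trans hww', hdw'w'', hW.of_cons.of_cons⟩
    exact h.length_ne_of_isCap hcap (by simpa using hW_len)

/- If `p, b, y` is a cup, then `y` lies above the chord `bw`, so `c, d, w` is a cap, and either it
extends to an `(n - 1)`-cap or `d` lies above the chord `bw` as well. Otherwise `y, w, w', W` is a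
cap, which `d` extends. -/
theorem false_of_gt (h : IsGonFree T n)
    (hB : IsCup T (b :: (B ++ [c, d]))) (hB_len : B.length + 5 = n)
    (hC : IsCup T (C ++ [p, b])) (hC_len : C.length + 4 = n)
    (hW : IsCap T (b :: w :: w' :: W)) (hW_len : W.length + 5 = n)
    (hY : IsCap T (d :: y :: Y)) (hY_len : Y.length + 4 = n) (hyw : y < w) : False := by
  have hT := h.isSignotope
  have hpb : p < b := hC.right_of_append.lt
  have hbd : b < d := (List.pairwise_cons.1 hB.pairwise).1 d (by simp)
  have hcd : c < d := (IsCup.right_of_append (l := b :: B) hB).lt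
  have hdy : d < y := hY.lt
  have hby : b < y := hbd.trans hdy
  have hdw : d < w := hdy.trans hyw
  have hww' : w < w' := hW.of_cons.lt
  have hbww' : ¬T b w w' := hW.2.1
  have hpbw : T p b w := h.turn_of_isCap hpb hW (by simpa using hW_len)
  have hcdy : T c d y := h.turn_of_isCap hcd hY hY_len
  have hbdy : T b d y := hB.turn_of_cons_concat hT hdy hcdy
  by_cases hpby : T p b y
  · have hpbd : ¬T p b d := fun hpbd => h.not_turn_of_isCup hC hC_len hbd hdy hpbd hbdy
    have hbyw : ¬T b y w := h.not_turn_of_isCup hC hC_len hby hyw hpby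
    have hcdw : ¬T c d w := fun hcdw =>
      hbyw (h.below_chord_of_turn hB hB_len hdw hcdw hby hyw)
    have hdww' : ¬T d w w' := by
      have := hT hpb hbd hdw
      have := hT hbd hdw hww'
      tauto
    exact h.length_ne_of_isCap (L := c :: d :: w :: w' :: W) ⟨hcd, hcdw, hdw, hdww', hW.of_cons⟩
      (by simpa using hW_len)
  · have hBy : IsCup T (b :: (B ++ [c, d, y])) := hB.cons_concat hdy hcdy
    have hdyw : ¬T d y w := fun hdyw =>
      h.length_ne_of_isCup (L := b :: (B ++ [c, d, y, w]))
        (by simpa using IsCup.cons_concat (l := B ++ [c]) (by simpa using hBy) hyw hdyw)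
        (by simpa using hB_len)
    have hyww' : ¬T y w w' := by
      have := hT hpb hby hyw
      have := hT hby hyw hww'
      tauto
    exact h.length_ne_of_isCap (L := d :: y :: w :: w' :: W)
      ⟨hdy, hdyw, hyw, hyww', hW.of_cons⟩ (by simpa using hW_len)

end Preorder

variable [LinearOrder α]

theorem false_of_isCup_of_ends (h : IsGonFree T n) (hn : 6 ≤ n) {C' : List α} {y' : α}
    (hB : IsCup T (b :: (B ++ [c, d]))) (hB_len : B.length + 5 = n)
    (hC : IsCup T (C ++ [p, b])) (hC_len : C.length + 4 = n)
    (hC' : IsCup T (C' ++ [q, c])) (hC'_len : C'.length + 4 = n)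
    (hW : IsCap T (b :: w :: w' :: W)) (hW_len : W.length + 5 = n)
    (hY : IsCap T (d :: y :: y' :: Y)) (hY_len : Y.length + 5 = n) : False := by
  rcases lt_trichotomy w y with hwy | rfl | hyw
  · exact h.false_of_lt hB hB_len hC hC_len hW (by simpa using hW_len) hY (by simpa using hY_len)
      hwy
  · exact h.false_of_eq hn hB hB_len hC' hC'_len hW hW_len hY (by simpa using hY_len)
  · exact h.false_of_gt hB hB_len hC hC_len hW hW_len hY (by simpa using hY_len) hyw

variable {Q Q' : Finset α} {m : ℕ}

theorem cupFreeOn_of_ends (h : IsGonFree T (m + 6)) (hend : ∀ x ∈ Q, IsCupEnd T Q' (m + 3) x)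
    (hstart : ∀ x ∈ Q, IsCupStart Tᶜ (m + 3) x) : CupFreeOn T Q (m + 4) := by
  intro L hL hLQ hlen
  obtain ⟨L, d, rfl⟩ := (List.eq_nil_or_concat' L).resolve_left
    (List.ne_nil_of_length_eq_add_one hlen)
  match L, hlen with
  | b :: L, hlen =>
    obtain ⟨B, c, rfl⟩ := (List.eq_nil_or_concat' L).resolve_left
      (List.ne_nil_of_length_eq_add_one (n := m + 1) (by simpa using hlen))
    obtain ⟨w, w', W, hW, hW_len⟩ := (hstart b (hLQ b (by simp))).exists_cup
    obtain ⟨y, y', Y, hY, hY_len⟩ := (hstart d (hLQ d (by simp))).exists_cup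
    obtain ⟨C, p, hC, -, hC_len⟩ := (hend b (hLQ b (by simp))).exists_cup
    obtain ⟨C', q, hC', -, hC'_len⟩ := (hend c (hLQ c (by simp))).exists_cup
    exact h.false_of_isCup_of_ends (by omega) (by simpa using hL) (by simpa using hlen)
      hC (by omega) hC' (by omega) hW (by omega) hY (by omega)

theorem capFreeOn_of_ends (h : IsGonFree T (m + 6)) (hend : ∀ x ∈ Q, IsCupEnd T Q' (m + 3) x)
    (hstart : ∀ x ∈ Q, IsCupStart Tᶜ (m + 3) x) : CupFreeOn Tᶜ Q (m + 4) := by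
  intro L hL hLQ hlen
  match L, hlen with
  | b :: c :: L, hlen =>
    obtain ⟨C, p, hC, -, hC_len⟩ := (hend b (hLQ b (by simp))).exists_cup
    obtain ⟨w, w', W, hW, hW_len⟩ := (hstart c (hLQ c (by simp))).exists_cup
    exact h.false_of_isCap_of_ends hL (by simpa using hlen) hC (by omega) hW
      (by simpa using hW_len)

theorem card_le_sum_choose [Fintype α] (h : IsGonFree T (m + 6)) :
    Fintype.card α ≤ (m + 4 + (m + 2)).choose (m + 4) +
      ((m + 2 + (m + 3)).choose (m + 2) + (m + 2 + (m + 2)).choose (m + 2)) := by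
  classical
  have hcup (Q : Finset α) : CupFreeOn T Q (m + 6) := fun L hL _ => h.length_ne_of_isCup hL
  have hcap (Q : Finset α) : CupFreeOn Tᶜ Q (m + 5) := fun L hL _ hlen =>
    h.length_ne_of_isCap hL (by omega)
  let X : Finset α := {x | IsCupStart Tᶜ (m + 3) x}
  have hstart : ∀ x ∈ X, IsCupStart Tᶜ (m + 3) x := by simp [X]
  have not_starts : Finset.card {x : α | ¬IsCupStart Tᶜ (m + 3) x}
      ≤ (m + 4 + (m + 2)).choose (m + 4) :=
    card_le_choose_of_cupFreeOn (hcup _) (cupFreeOn_filter_not_isCupStart Tᶜ Finset.univ (m + 3))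
  have not_ends : Finset.card {x ∈ X | ¬IsCupEnd T X (m + 3) x}
      ≤ (m + 2 + (m + 3)).choose (m + 2) :=
    card_le_choose_of_cupFreeOn (cupFreeOn_filter_not_isCupEnd T X (m + 3)) (hcap _)
  have ends : Finset.card {x ∈ X | IsCupEnd T X (m + 3) x} ≤ (m + 2 + (m + 2)).choose (m + 2) := by
    have hend : ∀ x ∈ X.filter (IsCupEnd T X (m + 3)), IsCupEnd T X (m + 3) x :=
      fun x hx => (Finset.mem_filter.1 hx).2
    have hstart' : ∀ x ∈ X.filter (IsCupEnd T X (m + 3)), IsCupStart Tᶜ (m + 3) x :=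
      fun x hx => hstart x (Finset.mem_filter.1 hx).1
    exact card_le_choose_of_cupFreeOn (h.cupFreeOn_of_ends hend hstart')
      (h.capFreeOn_of_ends hend hstart')
  have card_X : Finset.card {x ∈ X | IsCupEnd T X (m + 3) x}
      + Finset.card {x ∈ X | ¬IsCupEnd T X (m + 3) x} = X.card :=
    Finset.card_filter_add_card_filter_not _
  have card_univ : X.card + Finset.card {x : α | ¬IsCupStart Tᶜ (m + 3) x} = Fintype.card α :=
    Finset.card_filter_add_card_filter_not _
  omega

theorem card_add_choose_le [Fintype α] (h : IsGonFree T n) (hn : 6 ≤ n) :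
    Fintype.card α + (2 * n - 8).choose (n - 3) ≤ (2 * n - 5).choose (n - 2) := by
  obtain ⟨m, rfl⟩ := Nat.exists_eq_add_of_le' hn
  have pascal : (2 * m + 7).choose (m + 4) = (2 * m + 6).choose (m + 4) +
      ((2 * m + 5).choose (m + 2) + (2 * m + 4).choose (m + 2)) + (2 * m + 4).choose (m + 3) := by
    rw [Nat.choose_succ_succ' (2 * m + 6), Nat.choose_succ_succ' (2 * m + 5) (m + 2),
      Nat.choose_succ_succ' (2 * m + 4) (m + 2)]
    ring
  have hle := h.card_le_sum_choose
  rw [show m + 4 + (m + 2) = 2 * m + 6 by ring, show m + 2 + (m + 3) = 2 * m + 5 by ring,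
    show m + 2 + (m + 2) = 2 * m + 4 by ring] at hle
  rw [show 2 * (m + 6) - 8 = 2 * m + 4 by omega, show 2 * (m + 6) - 5 = 2 * m + 7 by omega,
    show m + 6 - 3 = m + 3 by omega, show m + 6 - 2 = m + 4 by omega]
  omega

end IsGonFree

end GonFree

/-! ### Convex polygons in the plane -/

section Plane

/-- Twice the signed area of the triangle `abc`; positive when it is counterclockwise. -/
def orient (a b c : Fin 2 → ℝ) : ℝ :=
  (b 0 - a 0) * (c 1 - a 1) - (b 1 - a 1) * (c 0 - a 0)

variable {a b c p z : Fin 2 → ℝ} {S : Finset (Fin 2 → ℝ)}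

theorem orient_rotate (a b c : Fin 2 → ℝ) : orient b c a = orient a b c := by
  unfold orient; ring

theorem orient_reverse (a b c : Fin 2 → ℝ) : orient c b a = -orient a b c := by
  unfold orient; ring

@[simp] theorem orient_self_left (a b : Fin 2 → ℝ) : orient a a b = 0 := by
  unfold orient; ring

@[simp] theorem orient_self_right (a b : Fin 2 → ℝ) : orient a b b = 0 := by
  unfold orient; ring

@[simp] theorem orient_self_outer (a b : Fin 2 → ℝ) : orient a b a = 0 := by
  unfold orient; ring

theorem affineIndependent_iff_orient_ne_zero :
    AffineIndependent ℝ ![a, b, c] ↔ orient a b c ≠ 0 := by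
  rw [affineIndependent_iff_linearIndependent_vsub ℝ _ 0,
    ← linearIndependent_equiv (finSuccAboveEquiv (0 : Fin 3))]
  have hrows : (fun i : {i : Fin 3 // i ≠ 0} => ![a, b, c] i -ᵥ ![a, b, c] 0) ∘
      finSuccAboveEquiv (0 : Fin 3) = (Matrix.of ![b - a, c - a]).row := by
    ext i; fin_cases i <;> rfl
  rw [hrows, Matrix.linearIndependent_rows_iff_isUnit, Matrix.isUnit_iff_isUnit_det,
    isUnit_iff_ne_zero, Matrix.det_fin_two]
  rfl

theorem orient_ne_zero (hS : InGeneralPosition 2 S) (ha : a ∈ S) (hb : b ∈ S) (hc : c ∈ S)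
    (hab : a ≠ b) (hac : a ≠ c) (hbc : b ≠ c) : orient a b c ≠ 0 := by
  classical
  have hind := hS {a, b, c} (by simp [Finset.insert_subset_iff, ha, hb, hc])
    (Finset.card_eq_three.2 ⟨a, b, c, hab, hac, hbc, rfl⟩)
  have hinj : Function.Injective ![a, b, c] := by
    intro i j
    fin_cases i <;> fin_cases j <;> simp [hab, hac, hbc, hab.symm, hac.symm, hbc.symm]
  have hrange : Set.range ![a, b, c] = (({a, b, c} : Finset (Fin 2 → ℝ)) : Set (Fin 2 → ℝ)) := by
    simp only [Matrix.range_cons, Matrix.range_empty, Set.union_empty, Set.singleton_union,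
      Finset.coe_insert, Finset.coe_singleton]
  refine affineIndependent_iff_orient_ne_zero.1 (.of_set_of_injective ?_ hinj)
  rw [hrange]
  exact hind

/-- The closed polygon with vertices `L`, in this order, is convex and traversed counterclockwise:
all triples of `L` are counterclockwise. -/
def IsCounterclockwise (L : List (Fin 2 → ℝ)) : Prop :=
  L.Triplewise fun a b c => 0 < orient a b c

theorem convex_setOf_lt_orient (z a : Fin 2 → ℝ) (r : ℝ) : Convex ℝ {v | r < orient z a v} := by
  refine convex_iff_forall_pos.2 fun u hu v hv s t hs ht hst => ?_
  have haff : orient z a (s • u + t • v) = s * orient z a u + t * orient z a v := by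
    obtain rfl : s = 1 - t := by linarith
    simp only [orient, Pi.add_apply, Pi.smul_apply, smul_eq_mul]
    ring
  calc r = s * r + t * r := by rw [← add_mul, hst, one_mul]
    _ < s * orient z a u + t * orient z a v := by gcongr <;> assumption
    _ = orient z a (s • u + t • v) := haff.symm

namespace IsCounterclockwise

variable {L L' : List (Fin 2 → ℝ)}

theorem rotate (h : IsCounterclockwise (L ++ L')) : IsCounterclockwise (L' ++ L) := by
  obtain ⟨hL, hL', h₁, h₂⟩ := List.triplewise_append.1 h
  refine List.triplewise_append.2 ⟨hL', hL, fun a ha => (h₂ a ha).imp fun huv => ?_,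
    fun a ha => (h₁ a ha).imp fun huv => ?_⟩
  · rwa [orient_rotate] at huv
  · rwa [← orient_rotate] at huv

theorem nodup (h : IsCounterclockwise L) (hlen : 3 ≤ L.length) : L.Nodup := by
  rw [IsCounterclockwise, List.triplewise_iff_getElem] at h
  refine List.pairwise_iff_getElem.2 fun i j hi hj hij heq => ?_
  rcases Nat.eq_zero_or_pos i with rfl | hi0
  · rcases (Nat.succ_le_of_lt hij).eq_or_lt with rfl | hj1
    · simpa [heq] using h 0 1 2 (by omega) (by omega) hlen
    · simpa [heq] using h 0 1 j (by omega) hj1 hj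
  · simpa [heq] using h 0 i j hi0 hij hj

/- The line through `p` parallel to the chord `za` of its neighbours has all other vertices strictly
on one side. -/
theorem notMem_convexHull (h : IsCounterclockwise (p :: a :: (L ++ [z]))) :
    p ∉ convexHull ℝ {v | v ∈ a :: (L ++ [z])} := by
  have hp := (List.triplewise_cons.1 h).1
  suffices hlt : {v | v ∈ a :: (L ++ [z])} ⊆ {v | orient z a p < orient z a v} from fun hmem =>
    lt_irrefl (orient z a p) (convexHull_min hlt (convex_setOf_lt_orient z a _) hmem :)
  simp only [List.pairwise_cons, List.pairwise_append] at hp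
  obtain ⟨ha, -, -, hz⟩ := hp
  have hpaz : 0 < orient p a z := ha z (by simp)
  have hdiff (v : Fin 2 → ℝ) : orient z a v - orient z a p = orient p a v + orient p v z := by
    unfold orient; ring
  intro v hv
  rw [Set.mem_ofPred_eq, ← sub_pos, hdiff]
  simp only [Set.mem_ofPred_eq, List.mem_cons, List.mem_append, List.not_mem_nil, or_false] at hv
  rcases hv with rfl | hv | rfl
  · simpa using hpaz
  · exact add_pos (ha v (by simp [hv])) (hz v hv z (by simp))
  · simpa using hpaz

theorem inConvexPosition (h : IsCounterclockwise L) (hlen : 3 ≤ L.length) :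
    InConvexPosition 2 L.toFinset := by
  intro p hp
  have hnodup := h.nodup hlen
  obtain ⟨l₁, l₂, rfl⟩ := List.append_of_mem (List.mem_toFinset.1 hp)
  have hrot : IsCounterclockwise (p :: (l₂ ++ l₁)) := h.rotate
  have herase : (((l₁ ++ p :: l₂).toFinset.erase p : Finset _) : Set (Fin 2 → ℝ)) =
      {v | v ∈ l₂ ++ l₁} := by
    ext v
    simp only [Finset.coe_erase, List.coe_toFinset, Set.mem_sdiff, Set.mem_ofPred_eq,
      Set.mem_singleton_iff]
    grind
  rw [herase]
  match h₂₁ : l₂ ++ l₁ with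
  | [] | [_] =>
    have hlen' := congrArg List.length h₂₁
    simp only [List.length_append, List.length_cons, List.length_nil] at hlen hlen'
    omega
  | a :: b :: M =>
    obtain ⟨M', z, hM⟩ := (List.eq_nil_or_concat' (b :: M)).resolve_left (List.cons_ne_nil _ _)
    rw [h₂₁, hM] at hrot
    rw [hM]
    exact hrot.notMem_convexHull

theorem exists_inConvexPosition (h : IsCounterclockwise L) (hlen : 3 ≤ L.length)
    (hLS : ∀ p ∈ L, p ∈ S) : ∃ X ⊆ S, X.card = L.length ∧ InConvexPosition 2 X :=
  ⟨L.toFinset, fun p hp => hLS p (List.mem_toFinset.1 hp),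
    List.toFinset_card_of_nodup (h.nodup hlen), h.inConvexPosition hlen⟩

end IsCounterclockwise

end Plane

/-! ### Angular order -/

section AngularOrder

/-- The points `f a` are listed clockwise about `x`, all of them within an open half-plane bounded
by a line through `x`. Seen from `x`, they are listed from left to right. -/
def IsAngularOrder {α : Type*} [LT α] (x : Fin 2 → ℝ) (f : α → Fin 2 → ℝ) : Prop :=
  ∀ ⦃a b⦄, a < b → orient x (f a) (f b) < 0

/-- The relation that three members of the family `f` form a left turn; its cups and caps are those
of the family. -/
def Turn {α : Type*} (f : α → Fin 2 → ℝ) (a b c : α) : Prop :=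
  0 < orient (f a) (f b) (f c)

theorem pos_iff_of_mul_eq_add {A B C u v w : ℝ} (hu : u < 0) (hv : v < 0) (hw : w < 0)
    (h : v * B = u * A + w * C) (hAC : 0 < A ↔ 0 < C) : 0 < B ↔ 0 < A := by
  rcases lt_or_ge 0 A with hA | hA
  · have hC := hAC.1 hA
    have : v * B < 0 := h ▸ add_neg (mul_neg_of_neg_of_pos hu hA) (mul_neg_of_neg_of_pos hw hC)
    exact iff_of_true (pos_of_mul_neg_right this hv.le) hA
  · have hC : C ≤ 0 := not_lt.1 (hAC.not.1 hA.not_gt)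
    have : 0 ≤ v * B := h ▸ add_nonneg (mul_nonneg_of_nonpos_of_nonpos hu.le hA)
      (mul_nonneg_of_nonpos_of_nonpos hw.le hC)
    exact iff_of_false (nonpos_of_mul_nonneg_right this hv).not_gt hA.not_gt

theorem exists_fin_strictMono_comp {E R : Type*} [LinearOrder R] {s : Finset E} {N : ℕ}
    (hs : s.card = N) {key : E → R} (hkey : Set.InjOn key s) :
    ∃ f : Fin N → E, (∀ i, f i ∈ s) ∧ StrictMono (key ∘ f) := by
  have hcard : (s.image key).card = N := (Finset.card_image_of_injOn hkey).trans hs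
  choose f hfs hf using fun i =>
    Finset.mem_image.1 ((s.image key).orderEmbOfFin_mem hcard i)
  exact ⟨f, hfs, by simpa only [Function.comp_def, hf] using
    ((s.image key).orderEmbOfFin hcard).strictMono⟩

/- All but finitely many slopes `ε` work. -/
theorem exists_injOn_add_mul (S : Finset (Fin 2 → ℝ)) :
    ∃ ε : ℝ, Set.InjOn (fun p : Fin 2 → ℝ => p 0 + ε * p 1) S := by
  obtain ⟨ε, hε⟩ := Infinite.exists_notMem_finset
    ((S ×ˢ S).image fun pq => -(pq.1 0 - pq.2 0) / (pq.1 1 - pq.2 1))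
  refine ⟨ε, fun p hp q hq (h : p 0 + ε * p 1 = q 0 + ε * q 1) => ?_⟩
  have h1 : p 1 = q 1 := by
    by_contra hne
    refine hε (Finset.mem_image.2 ⟨(p, q), Finset.mem_product.2 ⟨hp, hq⟩, ?_⟩)
    rw [div_eq_iff (sub_ne_zero.2 hne)]
    linarith
  have h0 : p 0 = q 0 := by rwa [h1, add_left_inj] at h
  exact funext (Fin.forall_fin_two.2 ⟨h0, h1⟩)

/- For a linear functional whose minimum over `S` is attained only at `x`, with `φ q` its value at
`q - x`, the clockwise order about `x` is that of minus the slope of `q - x` in the coordinates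
`(φ q, q 1)`. -/
theorem exists_isAngularOrder {S : Finset (Fin 2 → ℝ)} {N : ℕ} (hS : S.card = N + 1)
    (hgp : InGeneralPosition 2 S) :
    ∃ x ∈ S, ∃ f : Fin N → Fin 2 → ℝ, (∀ i, f i ∈ S) ∧ IsAngularOrder x f := by
  classical
  obtain ⟨ε, hε⟩ := exists_injOn_add_mul S
  obtain ⟨x, hx, hmin⟩ := S.exists_min_image (fun p => p 0 + ε * p 1)
    (Finset.card_pos.1 (by omega))
  let φ (q : Fin 2 → ℝ) : ℝ := q 0 - x 0 + ε * (q 1 - x 1)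
  let key (q : Fin 2 → ℝ) : ℝ := (x 1 - q 1) / φ q
  have φ_pos : ∀ q ∈ S.erase x, 0 < φ q := fun q hq => by
    obtain ⟨hqx, hqS⟩ := Finset.mem_erase.1 hq
    have hlt := (hmin q hqS).lt_of_ne fun h => hqx (hε hx hqS h).symm
    simp only [φ]
    linarith
  have orient_eq : ∀ p ∈ S.erase x, ∀ q ∈ S.erase x,
      orient x p q = φ p * φ q * (key p - key q) := fun p hp q hq => by
    have hp' := (φ_pos p hp).ne'
    have hq' := (φ_pos q hq).ne'
    simp only [key]
    field_simp
    simp only [orient, φ]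
    ring
  have key_injOn : Set.InjOn key (S.erase x) := fun p hp q hq hpq => by
    by_contra hne
    obtain ⟨hpx, hpS⟩ := Finset.mem_erase.1 hp
    obtain ⟨hqx, hqS⟩ := Finset.mem_erase.1 hq
    exact orient_ne_zero hgp hx hpS hqS hpx.symm hqx.symm hne (by simp [orient_eq p hp q hq, hpq])
  obtain ⟨f, hfS, hf⟩ := exists_fin_strictMono_comp
    (by rw [Finset.card_erase_of_mem hx, hS, Nat.add_sub_cancel]) key_injOn
  refine ⟨x, hx, f, fun i => Finset.mem_of_mem_erase (hfS i), fun i j hij => ?_⟩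
  rw [orient_eq _ (hfS i) _ (hfS j)]
  exact mul_neg_of_pos_of_neg (mul_pos (φ_pos _ (hfS i)) (φ_pos _ (hfS j))) (sub_neg.2 (hf hij))

namespace IsAngularOrder

variable {α : Type*} [Preorder α] {x : Fin 2 → ℝ} {f : α → Fin 2 → ℝ} {S : Finset (Fin 2 → ℝ)}
  {a b c t z : α} {L : List α} {n : ℕ}

/- Each sign constraint comes from a three-term Grassmann–Plücker relation among four of the points
and `x`, whose coefficients `orient x _ _` are negative. -/
theorem isSignotope (h : IsAngularOrder x f) : IsSignotope (Turn f) := by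
  intro a b c d hab hbc hcd
  have hac := hab.trans hbc
  have hbd := hbc.trans hcd
  have had := hab.trans hbd
  have habd : (Turn f a b c ↔ Turn f a c d) → (Turn f a b d ↔ Turn f a b c) :=
    pos_iff_of_mul_eq_add (h had) (h hac) (h hab) (by unfold orient; ring)
  have hacd : (Turn f a b c ↔ Turn f b c d) → (Turn f a c d ↔ Turn f a b c) :=
    pos_iff_of_mul_eq_add (h hcd) (h hbc) (h hac) (by unfold orient; ring)
  have hacd' : (Turn f a b d ↔ Turn f b c d) → (Turn f a c d ↔ Turn f a b d) :=
    pos_iff_of_mul_eq_add (h hcd) (h hbd) (h had) (by unfold orient; ring)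
  grind

theorem orient_neg_of_not_turn (h : IsAngularOrder x f) (hgp : InGeneralPosition 2 S)
    (hfS : ∀ a, f a ∈ S) (hab : a < b) (hbc : b < c) (hT : ¬Turn f a b c) :
    orient (f a) (f b) (f c) < 0 := by
  have hne : ∀ {a b}, a < b → f a ≠ f b := fun hab heq => by simpa [heq] using h hab
  exact (not_lt.1 hT).lt_of_ne
    (orient_ne_zero hgp (hfS a) (hfS b) (hfS c) (hne hab) (hne (hab.trans hbc)) (hne hbc))

theorem isCounterclockwise_of_isCup (h : IsAngularOrder x f) (hL : IsCup (Turn f) L) :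
    IsCounterclockwise (L.map f) :=
  List.triplewise_map.2 (hL.triplewise h.isSignotope)

theorem isCounterclockwise_of_isCap (h : IsAngularOrder x f) (hgp : InGeneralPosition 2 S)
    (hfS : ∀ a, f a ∈ S) (hL : IsCap (Turn f) L) :
    IsCounterclockwise (x :: L.map f).reverse := by
  have hx : L.Pairwise fun a b => 0 < orient (f b) (f a) x := hL.pairwise.imp fun hab => by
    rw [orient_reverse]
    exact neg_pos.2 (h hab)
  have htriples : L.Triplewise fun a b c => 0 < orient (f c) (f b) (f a) := by
    have hlt := hL.pairwise
    have hT := hL.triplewise h.isSignotope.compl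
    rw [List.triplewise_iff_getElem] at hT ⊢
    rw [List.pairwise_iff_getElem] at hlt
    intro i j k hij hjk hk
    rw [orient_reverse]
    exact neg_pos.2 (h.orient_neg_of_not_turn hgp hfS (hlt _ _ _ _ hij) (hlt _ _ _ _ hjk)
      (hT i j k hij hjk hk))
  rw [IsCounterclockwise, List.triplewise_reverse, List.triplewise_cons, List.pairwise_map,
    List.triplewise_map]
  exact ⟨hx, htriples⟩

/- Cramer's rule, applied with the apex `x`, writes the orientation of `u, v, t` in terms of the
cup's chords `au, uv, vz` and the position of `t` above the chord `az`. -/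
theorem orient_pos_of_not_turn {u v : α} (h : IsAngularOrder x f) (hgp : InGeneralPosition 2 S)
    (hfS : ∀ a, f a ∈ S) (huv : u < v) (hat : a < t) (htz : t < z) (hT : ¬Turn f a t z)
    (hauv : 0 ≤ orient (f a) (f u) (f v)) (huvz : 0 ≤ orient (f u) (f v) (f z)) :
    0 < orient (f u) (f v) (f t) := by
  have hatz := h.orient_neg_of_not_turn hgp hfS hat htz hT
  have cramer : orient x (f a) (f z) * orient (f u) (f v) (f t) =
      orient x (f t) (f z) * orient (f a) (f u) (f v)
        + orient x (f a) (f t) * orient (f u) (f v) (f z)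
        + -orient x (f u) (f v) * orient (f a) (f t) (f z) := by
    unfold orient; ring
  refine pos_of_mul_neg_right (a := orient x (f a) (f z)) ?_ (h (hat.trans htz)).le
  rw [cramer]
  exact add_neg_of_nonpos_of_neg
    (add_nonpos (mul_nonpos_of_nonpos_of_nonneg (h htz).le hauv)
      (mul_nonpos_of_nonpos_of_nonneg (h hat).le huvz))
    (mul_neg_of_pos_of_neg (neg_pos.2 (h huv)) hatz)

theorem isCounterclockwise_of_isCup_of_not_turn (h : IsAngularOrder x f)
    (hgp : InGeneralPosition 2 S) (hfS : ∀ a, f a ∈ S) (hL : IsCup (Turn f) (a :: (L ++ [z])))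
    (hat : a < t) (htz : t < z) (hT : ¬Turn f a t z) :
    IsCounterclockwise ((a :: (L ++ [z]) ++ [t]).map f) := by
  have htriples := hL.triplewise h.isSignotope
  have hleft : (a :: (L ++ [z])).Pairwise fun u v => 0 ≤ orient (f a) (f u) (f v) :=
    List.pairwise_cons.2 ⟨by simp, (List.triplewise_cons.1 htriples).1.imp le_of_lt⟩
  have hright : ((a :: L) ++ [z]).Pairwise fun u v => 0 ≤ orient (f u) (f v) (f z) :=
    List.pairwise_append.2 ⟨((List.triplewise_append (l₁ := a :: L)).1 htriples).2.2.2 z (by simp)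
      |>.imp le_of_lt, List.pairwise_singleton _ _, by simp⟩
  refine List.triplewise_map.2 (List.triplewise_append.2
    ⟨htriples, List.triplewise_singleton _ _, fun _ _ => List.pairwise_singleton _ _, ?_⟩)
  simp only [List.forall_mem_singleton]
  exact (hL.pairwise.and (hleft.and hright)).imp fun ⟨huv, hauv, huvz⟩ =>
    h.orient_pos_of_not_turn hgp hfS huv hat htz hT hauv huvz

theorem isGonFree (h : IsAngularOrder x f) (hgp : InGeneralPosition 2 S) (hx : x ∈ S)
    (hfS : ∀ a, f a ∈ S) (hn : 3 ≤ n) (hS : ∀ X ⊆ S, X.card = n → ¬InConvexPosition 2 X) :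
    IsGonFree (Turn f) n := by
  have length_ne {P : List (Fin 2 → ℝ)} (hP : IsCounterclockwise P) (hPS : ∀ p ∈ P, p ∈ S) :
      P.length ≠ n := fun hlen =>
    have ⟨X, hXS, hX, hconv⟩ := hP.exists_inConvexPosition (hlen ▸ hn) hPS
    hS X hXS (hX.trans hlen) hconv
  have map_mem {L : List α} : ∀ p ∈ L.map f, p ∈ S := List.forall_mem_map.2 fun a _ => hfS a
  refine ⟨h.isSignotope, fun {L} hL => ?_, fun {L} hL => ?_, fun {a z L} hL hlen t hat htz => ?_⟩
  · simpa using length_ne (h.isCounterclockwise_of_isCup hL) map_mem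
  · have hmem : ∀ p ∈ (x :: L.map f).reverse, p ∈ S := fun p hp =>
      List.forall_mem_cons.2 ⟨hx, map_mem⟩ p (List.mem_reverse.1 hp)
    simpa using length_ne (h.isCounterclockwise_of_isCap hgp hfS hL) hmem
  · by_contra hT
    exact length_ne (h.isCounterclockwise_of_isCup_of_not_turn hgp hfS hL hat htz hT) map_mem
      (by simpa using hlen)

end IsAngularOrder

end AngularOrder

end CupCap

open CupCap in
/- The bound `C(2n - 5, n - 2) - C(2n - 8, n - 3) + 2` of Mojarrad and Vlachos, stated without
subtracting the second binomial. -/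
theorem g2_9_le_1717_general {n : ℕ} (hn : 6 ≤ n) (S : Finset (Fin 2 → ℝ))
    (hcard : (2 * n - 5).choose (n - 2) + 2 ≤ S.card + (2 * n - 8).choose (n - 3))
    (hgp : InGeneralPosition 2 S) :
    ∃ X ⊆ S, X.card = n ∧ InConvexPosition 2 X := by
  by_contra! hS
  have choose_le : (2 * n - 8).choose (n - 3) ≤ (2 * n - 5).choose (n - 2) :=
    calc (2 * n - 8).choose (n - 3) ≤ (2 * n - 5).choose (n - 3) := Nat.choose_mono _ (by omega)
      _ = (2 * n - 5).choose (n - 2) := Nat.choose_symm_of_eq_add (by omega)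
  obtain ⟨N, hN⟩ : ∃ N, S.card = N + 1 := Nat.exists_eq_add_of_le' (by omega)
  obtain ⟨x, hx, f, hfS, hf⟩ := exists_isAngularOrder hN hgp
  have hgon : IsGonFree (Turn f) n := hf.isGonFree hgp hx hfS (by omega) hS
  have hle : N + (2 * n - 8).choose (n - 3) ≤ (2 * n - 5).choose (n - 2) := by
    simpa using hgon.card_add_choose_le hn
  omega

/-- Every set of `C(13,7) + 1 = 1717` points in the plane in general position
contains a 9-gon: `g⁽²⁾(9) ≤ 1717`. -/
theorem g2_9_le_1717 (S : Finset (Fin 2 → ℝ)) (hcard : S.card = Nat.choose 13 7 + 1)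
    (hgp : InGeneralPosition 2 S) :
    ∃ X ⊆ S, X.card = 9 ∧ InConvexPosition 2 X :=
  g2_9_le_1717_general (n := 9) (by norm_num) S (by rw [hcard]; decide) hgp
end

section
/- Every set of 9 points in the plane in general position contains 5 points in convex position; that is, g⁽²⁾(5) ≤ 9. -/
/-! ### Orientation -/

/-- Twice the signed area of the triangle `a b c`: positive when `a, b, c` is a counterclockwise
turn, zero when the points are collinear. -/
def orient (a b c : Fin 2 → ℝ) : ℝ :=
  (b 0 - a 0) * (c 1 - a 1) - (b 1 - a 1) * (c 0 - a 0)

theorem orient_rotate (a b c : Fin 2 → ℝ) : orient b c a = orient a b c := by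
  unfold orient; ring

theorem orient_reverse (a b c : Fin 2 → ℝ) : orient c b a = -orient a b c := by
  unfold orient; ring

theorem orient_self_left (a b : Fin 2 → ℝ) : orient a b a = 0 := by
  unfold orient; ring

theorem orient_self_right (a b : Fin 2 → ℝ) : orient a b b = 0 := by
  unfold orient; ring

theorem collinear_of_orient_eq_zero {a b c : Fin 2 → ℝ} (h : orient a b c = 0) :
    Collinear ℝ {c, a, b} := by
  obtain rfl | hab := eq_or_ne a b
  · simpa using collinear_pair ℝ c a
  obtain ⟨i, hi⟩ := Function.ne_iff.1 hab
  have hi' : b i - a i ≠ 0 := sub_ne_zero.2 hi.symm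
  suffices c = AffineMap.lineMap a b ((c i - a i) / (b i - a i)) by
    refine collinear_insert_of_mem_affineSpan_pair ?_
    rw [this]
    exact AffineMap.lineMap_mem_affineSpan_pair _ _ _
  have hcross (j : Fin 2) : (c j - a j) * (b i - a i) = (c i - a i) * (b j - a j) := by
    unfold orient at h
    fin_cases i <;> fin_cases j <;> dsimp only [Fin.zero_eta, Fin.mk_one] <;> linarith
  ext j
  rw [AffineMap.lineMap_apply, vsub_eq_sub, vadd_eq_add, Pi.add_apply, Pi.smul_apply, Pi.sub_apply,
    smul_eq_mul, div_mul_eq_mul_div, ← hcross, mul_div_cancel_right₀ _ hi', sub_add_cancel]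

theorem InGeneralPosition.orient_ne_zero {S : Finset (Fin 2 → ℝ)} (hS : InGeneralPosition 2 S)
    {a b c : Fin 2 → ℝ} (ha : a ∈ S) (hb : b ∈ S) (hc : c ∈ S)
    (hab : a ≠ b) (hac : a ≠ c) (hbc : b ≠ c) : orient a b c ≠ 0 := by
  intro h
  have hcard : ({c, a, b} : Finset (Fin 2 → ℝ)).card = 3 :=
    Finset.card_eq_three.2 ⟨c, a, b, hac.symm, hbc.symm, hab, rfl⟩
  have hind := hS {c, a, b} (by simp [Finset.insert_subset_iff, ha, hb, hc]) hcard
  have hrank := hind.finrank_vectorSpan (n := 2) (by simpa using hcard)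
  have hcol := collinear_iff_finrank_le_one.1 (collinear_of_orient_eq_zero h)
  have hrange : Set.range ((↑) : ({c, a, b} : Finset (Fin 2 → ℝ)) → Fin 2 → ℝ) = {c, a, b} := by
    ext x
    simp
  rw [hrange] at hrank
  omega

theorem notMem_convexHull_of_orient {a b q : Fin 2 → ℝ} {T : Set (Fin 2 → ℝ)}
    (hT : ∀ t ∈ T, orient a b t ≤ 0) (hq : 0 < orient a b q) : q ∉ convexHull ℝ T := by
  let f (t : Fin 2 → ℝ) : ℝ := (b 0 - a 0) * t 1 - (b 1 - a 1) * t 0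
  have hf : IsLinearMap ℝ f :=
    ⟨fun x y ↦ by simp only [f, Pi.add_apply]; ring,
      fun r x ↦ by simp only [f, Pi.smul_apply, smul_eq_mul]; ring⟩
  have hfa (t : Fin 2 → ℝ) : orient a b t = f t - f a := by
    simp only [orient, f]; ring
  have hsub : T ⊆ {t | f t ≤ f a} := fun t ht ↦ sub_nonpos.1 ((hfa t).symm.trans_le (hT t ht))
  intro hmem
  have hle : f q ≤ f a := convexHull_min hsub (convex_halfSpace_le hf (f a)) hmem
  linarith [hfa q]

/-! ### Convex polygons -/

/-- The points of `l`, in the given order, are the vertices of a convex polygon traversed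
counterclockwise. All triples are required to turn left, which also excludes closed polygons winding
around more than once. -/
def IsCounterclockwise (l : List (Fin 2 → ℝ)) : Prop :=
  l.Triplewise fun a b c ↦ 0 < orient a b c

theorem isCounterclockwise_reverse {l : List (Fin 2 → ℝ)} :
    IsCounterclockwise l.reverse ↔ l.Triplewise fun a b c ↦ orient a b c < 0 := by
  have hneg (a b c : Fin 2 → ℝ) : 0 < orient c b a ↔ orient a b c < 0 := by
    rw [orient_reverse, neg_pos]
  simp only [IsCounterclockwise, List.triplewise_reverse, hneg]

namespace IsCounterclockwise

theorem append_comm {l₁ l₂ : List (Fin 2 → ℝ)} (h : IsCounterclockwise (l₁ ++ l₂)) :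
    IsCounterclockwise (l₂ ++ l₁) := by
  obtain ⟨h₁, h₂, h₁₂, h₂₁⟩ := List.triplewise_append.1 h
  refine List.triplewise_append.2 ⟨h₂, h₁, fun a ha ↦ (h₂₁ a ha).imp fun h ↦ ?_,
    fun a ha ↦ (h₁₂ a ha).imp fun h ↦ ?_⟩
  · rwa [← orient_rotate]
  · rwa [orient_rotate]

theorem head_notMem_convexHull {p : Fin 2 → ℝ} {l : List (Fin 2 → ℝ)}
    (h : IsCounterclockwise (p :: l)) (hl : 2 ≤ l.length) : p ∉ convexHull ℝ {q | q ∈ l} := by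
  -- the line through the two neighbours of `p` cuts `p` off from the other vertices
  obtain ⟨a, l, rfl⟩ := List.exists_cons_of_length_pos (by omega : 0 < l.length)
  obtain rfl | ⟨m, b, rfl⟩ := l.eq_nil_or_concat'
  · simp at hl
  obtain ⟨hp, hl⟩ := List.triplewise_cons.1 h
  obtain ⟨ha, -⟩ := List.triplewise_cons.1 hl
  have hpab : 0 < orient p a b := (List.pairwise_cons.1 hp).1 b (by simp)
  have hatb : ∀ t ∈ m, 0 < orient a t b := fun t ht ↦
    (List.pairwise_append.1 ha).2.2 t ht b (by simp)
  refine notMem_convexHull_of_orient (a := a) (b := b) (fun t ht ↦ ?_) ?_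
  · obtain rfl | ht | rfl : t = a ∨ t ∈ m ∨ t = b := by simpa using ht
    · exact (orient_self_left _ _).le
    · linarith [orient_reverse b t a, orient_rotate a b t, orient_rotate t a b, hatb t ht]
    · exact (orient_self_right _ _).le
  · rwa [orient_rotate]

theorem notMem_convexHull_append {l₁ l₂ : List (Fin 2 → ℝ)} {p : Fin 2 → ℝ}
    (h : IsCounterclockwise (l₁ ++ p :: l₂)) (hl : 2 ≤ (l₁ ++ l₂).length) :
    p ∉ convexHull ℝ {q | q ∈ l₁ ++ l₂} := by
  have hrot : IsCounterclockwise (p :: (l₂ ++ l₁)) := h.append_comm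
  simpa only [List.mem_append, or_comm] using hrot.head_notMem_convexHull
    (by rwa [List.length_append, add_comm, ← List.length_append])

theorem nodup {l : List (Fin 2 → ℝ)} (h : IsCounterclockwise l) (hl : 3 ≤ l.length) :
    l.Nodup := by
  refine List.nodup_iff_count_le_one.2 fun p ↦ ?_
  by_contra! hcount
  obtain ⟨l₁, l₂, rfl⟩ := List.append_of_mem (List.count_pos_iff.1 (by omega : 0 < l.count p))
  rw [List.count_append, List.count_cons_self, ← add_assoc, ← List.count_append] at hcount
  have hmem : p ∈ l₁ ++ l₂ := List.count_pos_iff.1 (by omega)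
  exact h.notMem_convexHull_append (by grind) (subset_convexHull ℝ {q | q ∈ l₁ ++ l₂} hmem)

theorem inConvexPosition {l : List (Fin 2 → ℝ)} (h : IsCounterclockwise l) (hl : 3 ≤ l.length) :
    InConvexPosition 2 l.toFinset := by
  intro p hp hmem
  obtain ⟨l₁, l₂, rfl⟩ := List.append_of_mem (List.mem_toFinset.1 hp)
  have hsub : (((l₁ ++ p :: l₂).toFinset.erase p : Finset _) : Set (Fin 2 → ℝ)) ⊆
      {q | q ∈ l₁ ++ l₂} := fun q hq ↦ by
    grind [List.mem_toFinset]
  exact h.notMem_convexHull_append (by grind) (convexHull_mono hsub hmem)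

theorem exists_subset_inConvexPosition {S : Finset (Fin 2 → ℝ)} {l : List (Fin 2 → ℝ)}
    (h : IsCounterclockwise l) (hl : 3 ≤ l.length) (hS : ∀ q ∈ l, q ∈ S) :
    ∃ X ⊆ S, X.card = l.length ∧ InConvexPosition 2 X :=
  ⟨l.toFinset, fun _ hq ↦ hS _ (List.mem_toFinset.1 hq),
    List.toFinset_card_of_nodup (h.nodup hl), h.inConvexPosition hl⟩

end IsCounterclockwise

/-! ### Caps and cups -/

/-- The abstract conditions satisfied by the caps among the triples `a < b < c` when there is no
convex pentagon; a triple that is not a cap is a cup. The three fields exclude 4-caps, 5-cups, and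
4-cups `a, b, c, d` with a further point `x` above the chord from `a` to `d`. -/
structure IsPentagonFree {α : Type*} [LT α] (cap : α → α → α → Prop) : Prop where
  no_four_cap : ∀ ⦃a b c d⦄, a < b → b < c → c < d → cap a b c → ¬cap b c d
  no_five_cup : ∀ ⦃a b c d e⦄, a < b → b < c → c < d → d < e →
    ¬cap a b c → ¬cap b c d → cap c d e
  no_four_cup_below : ∀ ⦃a b c d x⦄, a < b → b < c → c < d → a < x → x < d →
    ¬cap a b c → ¬cap b c d → ¬cap a x d

namespace IsPentagonFree

theorem comp_strictAnti {α β : Type*} [Preorder α] [Preorder β] {cap : α → α → α → Prop}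
    (h : IsPentagonFree cap) {f : β → α} (hf : StrictAnti f) :
    IsPentagonFree fun a b c ↦ cap (f c) (f b) (f a) where
  no_four_cap _ _ _ _ hab hbc hcd habc hbcd :=
    h.no_four_cap (hf hcd) (hf hbc) (hf hab) hbcd habc
  no_five_cup _ _ _ _ _ hab hbc hcd hde habc hbcd := by
    by_contra hcde
    exact habc (h.no_five_cup (hf hde) (hf hcd) (hf hbc) (hf hab) hcde hbcd)
  no_four_cup_below _ _ _ _ _ hab hbc hcd hax hxd habc hbcd :=
    h.no_four_cup_below (hf hcd) (hf hbc) (hf hab) (hf hxd) (hf hax) hbcd habc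

section Forcing

variable {α : Type*} [LT α] {cap : α → α → α → Prop} {a b c d e x : α}

theorem cup_right (h : IsPentagonFree cap) (habc : cap a b c) (hab : a < b := by decide)
    (hbc : b < c := by decide) (hcd : c < d := by decide) : ¬cap b c d :=
  h.no_four_cap hab hbc hcd habc

theorem cup_left (h : IsPentagonFree cap) (hbcd : cap b c d) (hab : a < b := by decide)
    (hbc : b < c := by decide) (hcd : c < d := by decide) : ¬cap a b c :=
  fun habc ↦ h.no_four_cap hab hbc hcd habc hbcd

theorem cap_right (h : IsPentagonFree cap) (habc : ¬cap a b c) (hbcd : ¬cap b c d)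
    (hab : a < b := by decide) (hbc : b < c := by decide) (hcd : c < d := by decide)
    (hde : d < e := by decide) : cap c d e :=
  h.no_five_cup hab hbc hcd hde habc hbcd

theorem cap_middle (h : IsPentagonFree cap) (habc : ¬cap a b c) (hcde : ¬cap c d e)
    (hab : a < b := by decide) (hbc : b < c := by decide) (hcd : c < d := by decide)
    (hde : d < e := by decide) : cap b c d := by
  by_contra hbcd
  exact hcde (h.no_five_cup hab hbc hcd hde habc hbcd)

theorem cap_left (h : IsPentagonFree cap) (hbcd : ¬cap b c d) (hcde : ¬cap c d e)
    (hab : a < b := by decide) (hbc : b < c := by decide) (hcd : c < d := by decide)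
    (hde : d < e := by decide) : cap a b c := by
  by_contra habc
  exact hcde (h.no_five_cup hab hbc hcd hde habc hbcd)

theorem cup_below (h : IsPentagonFree cap) (habc : ¬cap a b c) (hbcd : ¬cap b c d)
    (hab : a < b := by decide) (hbc : b < c := by decide) (hcd : c < d := by decide)
    (hax : a < x := by decide) (hxd : x < d := by decide) : ¬cap a x d :=
  h.no_four_cup_below hab hbc hcd hax hxd habc hbcd

theorem cap_left_of_above (h : IsPentagonFree cap) (haxd : cap a x d) (hbcd : ¬cap b c d)
    (hab : a < b := by decide) (hbc : b < c := by decide) (hcd : c < d := by decide)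
    (hax : a < x := by decide) (hxd : x < d := by decide) : cap a b c := by
  by_contra habc
  exact h.no_four_cup_below hab hbc hcd hax hxd habc hbcd haxd

theorem cap_right_of_above (h : IsPentagonFree cap) (haxd : cap a x d) (habc : ¬cap a b c)
    (hab : a < b := by decide) (hbc : b < c := by decide) (hcd : c < d := by decide)
    (hax : a < x := by decide) (hxd : x < d := by decide) : cap b c d := by
  by_contra hbcd
  exact h.no_four_cup_below hab hbc hcd hax hxd habc hbcd haxd

end Forcing

section FinEight

variable {cap : Fin 8 → Fin 8 → Fin 8 → Prop}

theorem not_cap_two_three_five (h : IsPentagonFree cap) (h234 : ¬cap 2 3 4) : ¬cap 2 3 5 := by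
  intro h235
  have h123 : ¬cap 1 2 3 := h.cup_left h235
  have h012 : cap 0 1 2 := h.cap_left h123 h234
  have h346 : cap 3 4 6 := h.cap_right h123 h234
  have h347 : cap 3 4 7 := h.cap_right h123 h234
  have h023 : ¬cap 0 2 3 := h.cup_left h235
  have h014 : ¬cap 0 1 4 := h.cup_below h023 h234
  have h125 : ¬cap 1 2 5 := h.cup_right h012
  have h356 : ¬cap 3 5 6 := h.cup_right h235
  have h467 : ¬cap 4 6 7 := h.cup_right h346
  have h146 : cap 1 4 6 := h.cap_middle h014 h467
  have h567 : cap 5 6 7 := h.cap_right_of_above h347 h356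
  have h256 : cap 2 5 6 := h.cap_right_of_above h146 h125
  exact absurd h567 (h.cup_right h256)

theorem not_cap_zero_one_two (h : IsPentagonFree cap) (h234 : ¬cap 2 3 4) (h235 : ¬cap 2 3 5) :
    ¬cap 0 1 2 := by
  intro h012
  have h123 : ¬cap 1 2 3 := h.cup_right h012
  have h356 : cap 3 5 6 := h.cap_right h123 h235
  have h345 : cap 3 4 5 := h.cap_right h123 h234
  have h456 : ¬cap 4 5 6 := h.cup_right h345
  have h145 : ¬cap 1 4 5 := h.cup_below h123 h235
  have h567 : cap 5 6 7 := h.cap_right h145 h456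
  exact absurd h567 (h.cup_right h356)

theorem not_cap_five_six_seven (h : IsPentagonFree cap) (h234 : ¬cap 2 3 4) (h235 : ¬cap 2 3 5)
    (h012 : ¬cap 0 1 2) : ¬cap 5 6 7 := by
  intro h567
  have h356 : ¬cap 3 5 6 := h.cup_left h567
  have h456 : ¬cap 4 5 6 := h.cup_left h567
  have h246 : ¬cap 2 4 6 := h.cup_below h235 h356
  have h124 : cap 1 2 4 := h.cap_middle h012 h246
  have h245 : ¬cap 2 4 5 := h.cup_right h124
  have h345 : cap 3 4 5 := h.cap_middle h234 h456
  have h134 : ¬cap 1 3 4 := h.cup_left h345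
  have h024 : cap 0 2 4 := h.cap_left h245 h456
  have h457 : ¬cap 4 5 7 := h.cup_right h345
  have h013 : cap 0 1 3 := h.cap_left_of_above h024 h134
  have h135 : ¬cap 1 3 5 := h.cup_right h013
  have h267 : ¬cap 2 6 7 := h.cup_below h245 h457
  have h126 : ¬cap 1 2 6 := h.cup_below h135 h356
  exact h267 (h.cap_right h012 h126)

theorem not_cap_two_five_six (h : IsPentagonFree cap) (h234 : ¬cap 2 3 4) (h012 : ¬cap 0 1 2)
    (h567 : ¬cap 5 6 7) : ¬cap 2 5 6 := by
  intro h256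
  have h346 : cap 3 4 6 := h.cap_right_of_above h256 h234
  have h467 : ¬cap 4 6 7 := h.cup_right h346
  have h125 : ¬cap 1 2 5 := h.cup_left h256
  have h045 : ¬cap 0 4 5 := h.cup_below h012 h125
  have h456 : cap 4 5 6 := h.cap_middle h045 h567
  have h245 : ¬cap 2 4 5 := h.cup_left h456
  have h257 : cap 2 5 7 := h.cap_right h012 h125
  have h124 : cap 1 2 4 := h.cap_middle h012 h245
  have h246 : ¬cap 2 4 6 := h.cup_right h124
  exact absurd h257 (h.cup_below h246 h467)

theorem cap_two_five_six (h : IsPentagonFree cap) (h235 : ¬cap 2 3 5) (h012 : ¬cap 0 1 2)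
    (h567 : ¬cap 5 6 7) : cap 2 5 6 := by
  by_contra h256
  have h125 : cap 1 2 5 := h.cap_middle h012 h256
  have h356 : cap 3 5 6 := h.cap_middle h235 h567
  have h247 : ¬cap 2 4 7 := h.cup_below h256 h567
  have h025 : cap 0 2 5 := h.cap_left h256 h567
  have h135 : ¬cap 1 3 5 := h.cup_left h356
  have h013 : cap 0 1 3 := h.cap_left_of_above h025 h135
  have h134 : ¬cap 1 3 4 := h.cup_right h013
  have h124 : cap 1 2 4 := h.cap_middle h012 h247
  have h345 : cap 3 4 5 := h.cap_right_of_above h125 h134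
  have h245 : ¬cap 2 4 5 := h.cup_right h124
  have h456 : ¬cap 4 5 6 := h.cup_right h345
  exact h567 (h.cap_right h245 h456)

theorem cap_two_three_four (h : IsPentagonFree cap) : cap 2 3 4 := by
  by_contra h234
  have h235 := h.not_cap_two_three_five h234
  have h012 := h.not_cap_zero_one_two h234 h235
  have h567 := h.not_cap_five_six_seven h234 h235 h012
  exact h.not_cap_two_five_six h234 h012 h567 (h.cap_two_five_six h235 h012 h567)

end FinEight

end IsPentagonFree

theorem not_isPentagonFree_fin_eight (cap : Fin 8 → Fin 8 → Fin 8 → Prop) :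
    ¬IsPentagonFree cap := by
  intro h
  have h345 : cap 3 4 5 := (h.comp_strictAnti Fin.rev_strictAnti).cap_two_three_four
  exact absurd h345 (h.cup_right h.cap_two_three_four)

/-! ### Points sorted around a vertex -/

theorem orient_mul_orient_skip_third (p a b c d : Fin 2 → ℝ) :
    orient p b c * orient a b d = orient p a b * orient b c d + orient p b d * orient a b c := by
  unfold orient; ring

theorem orient_mul_orient_skip_second (p a b c d : Fin 2 → ℝ) :
    orient p b c * orient a c d = orient p a c * orient b c d + orient p c d * orient a b c := by
  unfold orient; ring

section Sorted

variable {p a b c d e x : Fin 2 → ℝ}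

theorem orient_pos_of_consecutive_pos (hsort : [a, b, c, d].Pairwise fun u v ↦ 0 < orient p u v)
    (habc : 0 < orient a b c) (hbcd : 0 < orient b c d) :
    0 < orient a b d ∧ 0 < orient a c d := by
  simp only [List.pairwise_cons, List.forall_mem_cons] at hsort
  obtain ⟨⟨hpab, hpac, -⟩, ⟨hpbc, hpbd, -⟩, ⟨hpcd, -⟩, -⟩ := hsort
  constructor
  · refine pos_of_mul_pos_right (a := orient p b c) ?_ hpbc.le
    rw [orient_mul_orient_skip_third]
    positivity
  · refine pos_of_mul_pos_right (a := orient p b c) ?_ hpbc.le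
    rw [orient_mul_orient_skip_second]
    positivity

theorem orient_neg_of_consecutive_neg (hsort : [a, b, c, d].Pairwise fun u v ↦ 0 < orient p u v)
    (habc : orient a b c < 0) (hbcd : orient b c d < 0) :
    orient a b d < 0 ∧ orient a c d < 0 := by
  simp only [List.pairwise_cons, List.forall_mem_cons] at hsort
  obtain ⟨⟨hpab, hpac, -⟩, ⟨hpbc, hpbd, -⟩, ⟨hpcd, -⟩, -⟩ := hsort
  constructor
  · refine neg_of_mul_neg_right (a := orient p b c) ?_ hpbc.le
    rw [orient_mul_orient_skip_third]
    exact add_neg (mul_neg_of_pos_of_neg hpab hbcd) (mul_neg_of_pos_of_neg hpbd habc)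
  · refine neg_of_mul_neg_right (a := orient p b c) ?_ hpbc.le
    rw [orient_mul_orient_skip_second]
    exact add_neg (mul_neg_of_pos_of_neg hpac hbcd) (mul_neg_of_pos_of_neg hpcd habc)

theorem isCounterclockwise_of_four_cap
    (hsort : [a, b, c, d].Pairwise fun u v ↦ 0 < orient p u v)
    (habc : 0 < orient a b c) (hbcd : 0 < orient b c d) : IsCounterclockwise [p, a, b, c, d] := by
  obtain ⟨habd, hacd⟩ := orient_pos_of_consecutive_pos hsort habc hbcd
  refine List.triplewise_cons.2 ⟨hsort, ?_⟩
  simp [List.triplewise_cons, *]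

theorem isCounterclockwise_of_five_cup
    (hsort : [a, b, c, d, e].Pairwise fun u v ↦ 0 < orient p u v) (habc : orient a b c < 0)
    (hbcd : orient b c d < 0) (hcde : orient c d e < 0) : IsCounterclockwise [e, d, c, b, a] := by
  have hsub {l : List (Fin 2 → ℝ)} (hl : l.Sublist [a, b, c, d, e]) := hsort.sublist hl
  obtain ⟨habd, hacd⟩ := orient_neg_of_consecutive_neg (hsub (by simp)) habc hbcd
  obtain ⟨hbce, hbde⟩ := orient_neg_of_consecutive_neg (hsub (by simp)) hbcd hcde
  obtain ⟨habe, hade⟩ := orient_neg_of_consecutive_neg (hsub (by simp)) habd hbde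
  obtain ⟨hace, -⟩ := orient_neg_of_consecutive_neg (hsub (by simp)) hacd hcde
  refine isCounterclockwise_reverse (l := [a, b, c, d, e]).2 ?_
  simp [List.triplewise_cons, *]

theorem orient_pos_of_below_chord (hsort : [a, b, d].Pairwise fun u v ↦ 0 < orient p u v)
    (hpax : 0 < orient p a x) (hpxd : 0 < orient p x d) (habd : orient a b d < 0)
    (haxd : 0 < orient a x d) : 0 < orient x d b ∧ 0 < orient x b a := by
  simp only [List.pairwise_cons, List.forall_mem_cons] at hsort
  obtain ⟨⟨hpab, hpad, -⟩, ⟨hpbd, -⟩, -⟩ := hsort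
  have hxdb : orient p a d * orient x d b =
      orient p b d * orient a x d - orient p x d * orient a b d := by
    unfold orient; ring
  have hxba : orient p a d * orient x b a =
      orient p a b * orient a x d - orient p a x * orient a b d := by
    unfold orient; ring
  constructor
  · refine pos_of_mul_pos_right (hxdb ▸ sub_pos.2 ?_) hpad.le
    exact (mul_neg_of_pos_of_neg hpxd habd).trans (mul_pos hpbd haxd)
  · refine pos_of_mul_pos_right (hxba ▸ sub_pos.2 ?_) hpad.le
    exact (mul_neg_of_pos_of_neg hpax habd).trans (mul_pos hpab haxd)

theorem isCounterclockwise_of_four_cup_below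
    (hsort : [a, b, c, d].Pairwise fun u v ↦ 0 < orient p u v) (hpax : 0 < orient p a x)
    (hpxd : 0 < orient p x d) (habc : orient a b c < 0) (hbcd : orient b c d < 0)
    (haxd : 0 < orient a x d) : IsCounterclockwise [x, d, c, b, a] := by
  obtain ⟨habd, hacd⟩ := orient_neg_of_consecutive_neg hsort habc hbcd
  obtain ⟨hxdb, hxba⟩ :=
    orient_pos_of_below_chord (hsort.sublist (by simp)) hpax hpxd habd haxd
  obtain ⟨hxdc, hxca⟩ :=
    orient_pos_of_below_chord (hsort.sublist (by simp)) hpax hpxd hacd haxd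
  have hxda : 0 < orient x d a := by rwa [orient_rotate]
  have hxcb : 0 < orient x c b := by
    have hmul : orient x c b * orient a b d =
        orient x b a * orient b c d + orient x d b * orient a b c := by
      unfold orient; ring
    refine pos_of_mul_neg_left (hmul ▸ ?_) habd.le
    exact add_neg (mul_neg_of_pos_of_neg hxba hbcd) (mul_neg_of_pos_of_neg hxdb habc)
  refine List.triplewise_cons.2 ⟨by simp [*], ?_⟩
  refine isCounterclockwise_reverse (l := [a, b, c, d]).2 ?_
  simp [List.triplewise_cons, *]

end Sorted

theorem InGeneralPosition.isPentagonFree {S : Finset (Fin 2 → ℝ)} (hS : InGeneralPosition 2 S)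
    (hfree : ∀ l : List (Fin 2 → ℝ), IsCounterclockwise l → (∀ q ∈ l, q ∈ S) → l.length ≠ 5)
    {ι : Type*} [Preorder ι] {p : Fin 2 → ℝ} (hp : p ∈ S) {P : ι → Fin 2 → ℝ} (hP : ∀ i, P i ∈ S)
    (hsort : ∀ i j, i < j → 0 < orient p (P i) (P j)) :
    IsPentagonFree fun i j k ↦ 0 < orient (P i) (P j) (P k) := by
  have hne {i j : ι} (hij : i < j) : P i ≠ P j := fun h ↦
    (hsort i j hij).ne' (h ▸ orient_self_right p (P i))
  have hcup {i j k : ι} (hij : i < j) (hjk : j < k) (h : ¬0 < orient (P i) (P j) (P k)) :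
      orient (P i) (P j) (P k) < 0 :=
    lt_of_le_of_ne (not_lt.1 h)
      (hS.orient_ne_zero (hP i) (hP j) (hP k) (hne hij) (hne (hij.trans hjk)) (hne hjk))
  have hsortP {l : List ι} (hl : l.Pairwise (· < ·)) :
      (l.map P).Pairwise fun u v ↦ 0 < orient p u v :=
    List.pairwise_map.2 (hl.imp (hsort _ _))
  refine ⟨fun i j k l hij hjk hkl hijk hjkl ↦ ?_,
    fun i j k l m hij hjk hkl hlm hijk hjkl ↦ ?_,
    fun i j k l x hij hjk hkl hix hxl hijk hjkl hixl ↦ ?_⟩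
  · have hccw := isCounterclockwise_of_four_cap (hsortP (l := [i, j, k, l]) (by grind)) hijk hjkl
    exact hfree _ hccw (by simp [hp, hP]) rfl
  · by_contra hklm
    have hccw := isCounterclockwise_of_five_cup (hsortP (l := [i, j, k, l, m]) (by grind))
      (hcup hij hjk hijk) (hcup hjk hkl hjkl) (hcup hkl hlm hklm)
    exact hfree _ hccw (by simp [hP]) rfl
  · have hccw := isCounterclockwise_of_four_cup_below (hsortP (l := [i, j, k, l]) (by grind))
      (hsort i x hix) (hsort x l hxl) (hcup hij hjk hijk) (hcup hjk hkl hjkl) hixl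
    exact hfree _ hccw (by simp [hP]) rfl

/-! ### Sorting by polar angle -/

/-- The vector from `p` to `q` as a complex number, whose argument is the direction in which `q` is
seen from `p`. -/
def displacement (p q : Fin 2 → ℝ) : ℂ :=
  ⟨q 0 - p 0, q 1 - p 1⟩

theorem re_mul_im_sub_im_mul_re (z w : ℂ) :
    z.re * w.im - z.im * w.re = ‖z‖ * ‖w‖ * Real.sin (w.arg - z.arg) := by
  rw [Real.sin_sub, ← Complex.norm_mul_cos_arg z, ← Complex.norm_mul_sin_arg z,
    ← Complex.norm_mul_cos_arg w, ← Complex.norm_mul_sin_arg w]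
  ring

theorem orient_eq_norm_mul_norm_mul_sin (p u v : Fin 2 → ℝ) :
    orient p u v = ‖displacement p u‖ * ‖displacement p v‖ *
      Real.sin ((displacement p v).arg - (displacement p u).arg) :=
  re_mul_im_sub_im_mul_re (displacement p u) (displacement p v)

theorem arg_displacement_mem_Ioc {p q : Fin 2 → ℝ} (h : toLex (p 0, p 1) < toLex (q 0, q 1)) :
    (displacement p q).arg ∈ Set.Ioc (-(Real.pi / 2)) (Real.pi / 2) := by
  rw [Prod.Lex.toLex_lt_toLex] at h
  refine ⟨Complex.neg_pi_div_two_lt_arg_iff.2 ?_, Complex.arg_le_pi_div_two_iff.2 (.inl ?_)⟩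
  · exact h.imp sub_pos.2 fun h ↦ sub_nonneg.2 h.2.le
  · exact sub_nonneg.2 (h.elim le_of_lt fun h ↦ h.1.le)

theorem displacement_ne_zero {p q : Fin 2 → ℝ} (h : p ≠ q) : displacement p q ≠ 0 := by
  contrapose! h
  have h' := Complex.ext_iff.1 h
  ext i
  fin_cases i
  exacts [(sub_eq_zero.1 h'.1).symm, (sub_eq_zero.1 h'.2).symm]

theorem orient_pos_of_arg_lt {p u v : Fin 2 → ℝ}
    (hu : toLex (p 0, p 1) < toLex (u 0, u 1)) (hv : toLex (p 0, p 1) < toLex (v 0, v 1))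
    (huv : (displacement p u).arg < (displacement p v).arg) : 0 < orient p u v := by
  have hnorm {q : Fin 2 → ℝ} (hq : toLex (p 0, p 1) < toLex (q 0, q 1)) :
      0 < ‖displacement p q‖ :=
    norm_pos_iff.2 (displacement_ne_zero fun h ↦ hq.ne (by rw [h]))
  have hu' := arg_displacement_mem_Ioc hu
  have hv' := arg_displacement_mem_Ioc hv
  rw [orient_eq_norm_mul_norm_mul_sin]
  exact mul_pos (mul_pos (hnorm hu) (hnorm hv))
    (Real.sin_pos_of_pos_of_lt_pi (sub_pos.2 huv) (by linarith [hu'.1, hv'.2]))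

theorem exists_strictMono_comp_of_injOn {α β : Type*} [LinearOrder β] {s : Finset α} {f : α → β}
    (hf : Set.InjOn f s) {n : ℕ} (hn : n ≤ s.card) :
    ∃ P : Fin n → α, (∀ i, P i ∈ s) ∧ StrictMono (f ∘ P) := by
  have hn' : n ≤ (s.image f).card := by rwa [Finset.card_image_of_injOn hf]
  choose P hPs hPf using fun i ↦ Finset.mem_image.1 ((s.image f).orderEmbOfCardLe_mem hn' i)
  exact ⟨P, hPs, fun i j hij ↦ by
    simpa only [Function.comp_apply, hPf] using ((s.image f).orderEmbOfCardLe hn').strictMono hij⟩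

theorem InGeneralPosition.exists_sorted_around {S : Finset (Fin 2 → ℝ)}
    (hS : InGeneralPosition 2 S) {n : ℕ} (hn : n < S.card) :
    ∃ p ∈ S, ∃ P : Fin n → Fin 2 → ℝ, (∀ i, P i ∈ S) ∧
      ∀ i j, i < j → 0 < orient p (P i) (P j) := by
  obtain ⟨p, hp, hmin⟩ := S.exists_min_image (fun q ↦ toLex (q 0, q 1))
    (Finset.card_pos.1 (by omega))
  have hlt : ∀ q ∈ S.erase p, toLex (p 0, p 1) < toLex (q 0, q 1) := by
    intro q hq
    obtain ⟨hqp, hqS⟩ := Finset.mem_erase.1 hq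
    refine lt_of_le_of_ne (hmin q hqS) fun h ↦ hqp ?_
    have h' := Prod.ext_iff.1 (toLex_inj.1 h)
    ext i
    fin_cases i
    exacts [h'.1.symm, h'.2.symm]
  have hinj : Set.InjOn (fun q ↦ (displacement p q).arg) (S.erase p) := by
    intro u hu v hv (huv : (displacement p u).arg = (displacement p v).arg)
    by_contra hne
    obtain ⟨hup, huS⟩ := Finset.mem_erase.1 hu
    obtain ⟨hvp, hvS⟩ := Finset.mem_erase.1 hv
    refine hS.orient_ne_zero hp huS hvS hup.symm hvp.symm hne ?_
    rw [orient_eq_norm_mul_norm_mul_sin, huv, sub_self, Real.sin_zero, mul_zero]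
  obtain ⟨P, hP, hmono⟩ := exists_strictMono_comp_of_injOn hinj (n := n)
    (by rw [Finset.card_erase_of_mem hp]; omega)
  exact ⟨p, hp, P, fun i ↦ Finset.mem_of_mem_erase (hP i), fun i j hij ↦
    orient_pos_of_arg_lt (hlt _ (hP i)) (hlt _ (hP j)) (hmono hij)⟩

theorem g2_5_le_9_general (S : Finset (Fin 2 → ℝ)) (hcard : 9 ≤ S.card)
    (hgp : InGeneralPosition 2 S) :
    ∃ X ⊆ S, X.card = 5 ∧ InConvexPosition 2 X := by
  obtain ⟨p, hp, P, hP, hsort⟩ := hgp.exists_sorted_around (n := 8) hcard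
  by_contra! hno
  refine not_isPentagonFree_fin_eight _ (hgp.isPentagonFree (fun l hccw hlS hl ↦ ?_) hp hP hsort)
  obtain ⟨X, hXS, hX, hconv⟩ := hccw.exists_subset_inConvexPosition (by omega) hlS
  exact hno X hXS (hX.trans hl) hconv

/-- Every set of 9 points in the plane in general position contains a 5-gon:
`g⁽²⁾(5) ≤ 9`. -/
theorem g2_5_le_9 (S : Finset (Fin 2 → ℝ)) (hcard : S.card = 9)
    (hgp : InGeneralPosition 2 S) :
    ∃ X ⊆ S, X.card = 5 ∧ InConvexPosition 2 X :=
  g2_5_le_9_general S hcard.ge hgp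
end

section
/- (Grassmann–Plücker relations) For any vectors a₁,…,a_r, b₁,…,b_r ∈ ℝ^r (r ≥ 1), one has det(a₁,…,a_r) · det(b₁,…,b_r) = Σ_{i=1}^{r} det(b_i, a₂,…,a_r) · det(b₁,…,b_{i−1}, a₁, b_{i+1},…,b_r), where det(v₁,…,v_r) denotes the determinant of the r×r matrix with columns v₁,…,v_r. -/
/-!
Cramer's rule in the form `∑ i, det (b₁, …, w, …, b_r) • b_i = det B • w`, with `w` in the `i`-th
place, holds for every vector `w` and every square matrix `B`, invertible or not. Take `w = a₁` and
apply the linear functional `w ↦ det (w, a₂, …, a_r)` to both sides.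
-/

/-- The determinant of the `r × r` matrix whose columns are the vectors
`v 0, …, v (r-1)` in `ℝ^r`. -/
def colDet {r : ℕ} (v : Fin r → (Fin r → ℝ)) : ℝ :=
  Matrix.det (Matrix.of fun i j => v j i)

open Matrix

section CommRing

variable {n R : Type*} [Fintype n] [DecidableEq n] [CommRing R]

theorem sum_det_updateCol_smul_col (B : Matrix n n R) (w : n → R) :
    ∑ i, (B.updateCol i w).det • B.col i = B.det • w := by
  simp only [← cramer_apply, ← mulVec_cramer, mulVec_eq_sum, op_smul_eq_smul]
  rfl

theorem grassmann_pluecker_general (A B : Matrix n n R) (k : n) :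
    A.det * B.det =
      ∑ i, (A.updateCol k (B.col i)).det * (B.updateCol i (A.col k)).det := by
  calc A.det * B.det
      = A.cramer (B.det • A.col k) k := by
        rw [map_smul, cramer_row_self A (A.col k) k fun _ => rfl, Pi.smul_apply,
          Pi.single_eq_same, smul_eq_mul, mul_comm]
    _ = A.cramer (∑ i, (B.updateCol i (A.col k)).det • B.col i) k := by
        rw [sum_det_updateCol_smul_col]
    _ = ∑ i, (B.updateCol i (A.col k)).det * A.cramer (B.col i) k := by
        simp only [map_sum, map_smul, Finset.sum_apply, Pi.smul_apply, smul_eq_mul]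
    _ = ∑ i, (A.updateCol k (B.col i)).det * (B.updateCol i (A.col k)).det := by
        simp only [cramer_apply, mul_comm]

end CommRing

theorem colDet_update {r : ℕ} (v : Fin r → (Fin r → ℝ)) (i : Fin r) (w : Fin r → ℝ) :
    colDet (Function.update v i w) = ((of v)ᵀ.updateCol i w).det :=
  congrArg det (updateCol_transpose ..).symm

/-- The Graßmann–Plücker relations: for any vectors
`a₁, …, a_r, b₁, …, b_r ∈ ℝ^r` (with `r ≥ 1`),
`det(a₁,…,a_r) ⬝ det(b₁,…,b_r)
  = ∑_{i=1}^{r} det(b_i, a₂,…,a_r) ⬝ det(b₁,…,b_{i−1}, a₁, b_{i+1},…,b_r)`. -/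
theorem grassmann_pluecker (r : ℕ) (hr : 0 < r) (a b : Fin r → (Fin r → ℝ)) :
    colDet a * colDet b =
      ∑ i : Fin r,
        colDet (Function.update a ⟨0, hr⟩ (b i)) *
          colDet (Function.update b i (a ⟨0, hr⟩)) := by
  simp only [colDet_update]
  exact grassmann_pluecker_general (of a)ᵀ (of b)ᵀ ⟨0, hr⟩
end

section
/- (Acyclicity of point chirotopes) Let p₁,…,p_{d+1}, p_{d+2} be points in ℝ^d such that det(p₁,…,p_{d+1}) > 0, where det is taken of homogeneous coordinates. Then it cannot hold that det(p₁,…,p_{i−1}, p_{d+2}, p_{i+1},…,p_{d+1}) < 0 for every i = 1,…,d+1. -/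
/-!
Let the columns `A j` of a square matrix `A` and the vector `b` lie on the nonnegative, respectively
the open positive, side of a hyperplane `f = 0`. By Cramer's rule the determinants `D j` obtained
from `A` by replacing column `j` with `b` satisfy `∑ j, D j • A j = det A • b`. Applying `f` gives
`∑ j, f (A j) * D j = f b * det A`, so if `det A` is positive then some `D j` is positive.
For homogeneous coordinates of points, `f` is the coordinate that is constantly `1`.
-/

/-- For points `q 0, …, q d` in `ℝ^d`, the determinant of the `(d+1) × (d+1)`
matrix whose `j`-th column is the homogeneous coordinate vector
`(1, q j) ∈ ℝ^{d+1}`. -/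
def homDet {d : ℕ} (q : Fin (d + 1) → (Fin d → ℝ)) : ℝ :=
  Matrix.det (Matrix.of fun i j => (Fin.cons (1 : ℝ) (q j) : Fin (d + 1) → ℝ) i)

/-- The matrix of homogeneous coordinates of `d + 1` points in `R ^ d`: its `j`-th column is
`(1, p j)`. This is the matrix whose determinant is `homDet p` when `R = ℝ`. -/
def homMatrix {R : Type*} [One R] {d : ℕ} (p : Fin (d + 1) → Fin d → R) :
    Matrix (Fin (d + 1)) (Fin (d + 1)) R :=
  Matrix.of fun i j => (Fin.cons 1 (p j) : Fin (d + 1) → R) i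

theorem homMatrix_update {R : Type*} [One R] {d : ℕ} (p : Fin (d + 1) → Fin d → R)
    (i : Fin (d + 1)) (q : Fin d → R) :
    homMatrix (Function.update p i q) = (homMatrix p).updateCol i (Fin.cons 1 q) := by
  ext k j
  rcases eq_or_ne j i with rfl | hji
  · simp [homMatrix]
  · simp [homMatrix, hji]

theorem homDet_update {d : ℕ} (p : Fin (d + 1) → Fin d → ℝ) (i : Fin (d + 1)) (q : Fin d → ℝ) :
    homDet (Function.update p i q) = ((homMatrix p).updateCol i (Fin.cons 1 q)).det :=
  congrArg Matrix.det (homMatrix_update p i q)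

section Cramer

open Matrix

variable {n R : Type*} [Fintype n] [DecidableEq n] [CommRing R]

theorem sum_vecMul_mul_det_updateCol (A : Matrix n n R) (f b : n → R) :
    ∑ j, (f ᵥ* A) j * (A.updateCol j b).det = f ⬝ᵥ b * A.det :=
  calc
    ∑ j, (f ᵥ* A) j * (A.updateCol j b).det = (f ᵥ* A) ⬝ᵥ A.cramer b := by
      simp only [dotProduct, cramer_apply]
    _ = f ⬝ᵥ (A *ᵥ A.cramer b) := (dotProduct_mulVec f A (A.cramer b)).symm
    _ = f ⬝ᵥ b * A.det := by
      rw [mulVec_cramer, dotProduct_smul, smul_eq_mul, mul_comm]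

theorem point_chirotope_acyclic_general [LinearOrder R] [IsStrictOrderedRing R]
    (A : Matrix n n R) (f b : n → R) (hA : ∀ j, 0 ≤ (f ᵥ* A) j) (hb : 0 < f ⬝ᵥ b)
    (hdet : 0 < A.det) : ∃ j, 0 < (A.updateCol j b).det := by
  by_contra! hneg
  have hsum : ∑ j, (f ᵥ* A) j * (A.updateCol j b).det ≤ 0 :=
    Finset.sum_nonpos fun j _ => mul_nonpos_of_nonneg_of_nonpos (hA j) (hneg j)
  rw [sum_vecMul_mul_det_updateCol] at hsum
  exact (mul_pos hb hdet).not_ge hsum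

end Cramer

/-- Acyclicity of point chirotopes: if `p₁, …, p_{d+1}` are points in `ℝ^d` with
`det(p₁,…,p_{d+1}) > 0` (homogeneous coordinates), then for a further point
`p_{d+2}` it cannot hold that `det(p₁,…,p_{i−1}, p_{d+2}, p_{i+1},…,p_{d+1}) < 0`
for every `i = 1,…,d+1`. -/
theorem point_chirotope_acyclic (d : ℕ) (p : Fin (d + 1) → (Fin d → ℝ))
    (q : Fin d → ℝ) (hp : 0 < homDet p) :
    ¬ ∀ i : Fin (d + 1), homDet (Function.update p i q) < 0 := by
  obtain ⟨i, hi⟩ := point_chirotope_acyclic_general (homMatrix p) (Pi.single 0 1) (Fin.cons 1 q)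
    (by simp [homMatrix]) (by simp) hp
  exact fun h => (h i).not_gt (homDet_update p i q ▸ hi)
end

section
/- (Triangulation through a fixed vertex) Let X be a finite set of at least d+1 points in ℝ^d in general position, let q ∈ X be a point at which the first coordinate is minimized over X, and let p be a point contained in the convex hull of X. Then there exist d points q₁,…,q_d ∈ X \ {q} such that p lies in the convex hull of {q, q₁,…,q_d}. -/
theorem card_le_finrank_vectorSpan_add_one_of_affineIndependent {k V P : Type*} [DivisionRing k]
    [AddCommGroup V] [Module k V] [AddTorsor V P] {s : Set P} [FiniteDimensional k (vectorSpan k s)]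
    {t : Finset P} (hts : ↑t ⊆ s) (ht : AffineIndependent k ((↑) : t → P)) :
    t.card ≤ Module.finrank k (vectorSpan k s) + 1 := by
  have hcard := ht.card_le_finrank_succ
  rw [Fintype.card_coe, Subtype.range_coe_subtype] at hcard
  have hspan : vectorSpan k (t : Set P) ≤ vectorSpan k s := vectorSpan_mono k hts
  exact hcard.trans (Nat.add_le_add_right (Submodule.finrank_mono hspan) 1)

section LinearOrderedField

variable {𝕜 : Type*} [Field 𝕜] [LinearOrder 𝕜] [IsStrictOrderedRing 𝕜]

theorem exists_pos_forall_div_mul_le {ι : Type*} {t : Finset ι} {f g : ι → 𝕜}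
    (hf : ∀ i ∈ t, 0 ≤ f i) (hg : ∃ i ∈ t, 0 < g i) :
    ∃ i ∈ t, 0 < g i ∧ ∀ j ∈ t, f i / g i * g j ≤ f j := by
  have hpos : {i ∈ t | 0 < g i}.Nonempty := Finset.filter_nonempty_iff.2 hg
  obtain ⟨i, hi, hmin⟩ := Finset.exists_min_image _ (fun j ↦ f j / g j) hpos
  obtain ⟨hit, hgi⟩ := Finset.mem_filter.1 hi
  refine ⟨i, hit, hgi, fun j hj ↦ ?_⟩
  rcases lt_or_ge 0 (g j) with hgj | hgj
  · exact (le_div_iff₀ hgj).1 (hmin j (Finset.mem_filter.2 ⟨hj, hgj⟩))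
  · have hratio : 0 ≤ f i / g i := div_nonneg (hf i hit) hgi.le
    exact (mul_nonpos_of_nonneg_of_nonpos hratio hgj).trans (hf j hj)

variable {E : Type*} [AddCommGroup E] [Module 𝕜 E]

theorem exists_affine_relation_nonpos_at {t : Finset E}
    (ht : ¬AffineIndependent 𝕜 ((↑) : t → E)) (q : E) :
    ∃ g : E → 𝕜, ∑ x ∈ t, g x • x = 0 ∧ ∑ x ∈ t, g x = 0 ∧ g q ≤ 0 ∧ ∃ x ∈ t, 0 < g x := by
  obtain ⟨g, hcomb, hsum, x, hx, hgx⟩ := exists_nontrivial_relation_sum_zero_of_not_affine_ind ht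
  rcases le_total (g q) 0 with hq | hq
  · exact ⟨g, hcomb, hsum, hq, Finset.exists_pos_of_sum_zero_of_exists_nonzero g hsum ⟨x, hx, hgx⟩⟩
  · have hsum' : ∑ x ∈ t, (-g) x = 0 := by simp [hsum]
    exact ⟨-g, by simp [hcomb], hsum', neg_nonpos.2 hq,
      Finset.exists_pos_of_sum_zero_of_exists_nonzero _ hsum' ⟨x, hx, neg_ne_zero.2 hgx⟩⟩

theorem exists_ne_mem_convexHull_erase [DecidableEq E] {t : Finset E}
    (ht : ¬AffineIndependent 𝕜 ((↑) : t → E)) (q : E) {p : E}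
    (hp : p ∈ convexHull 𝕜 (t : Set E)) :
    ∃ y ∈ t, y ≠ q ∧ p ∈ convexHull 𝕜 (t.erase y : Set E) := by
  obtain ⟨w, hw, hw_sum, hw_comb⟩ := Finset.mem_convexHull'.1 hp
  obtain ⟨g, hg_comb, hg_sum, hgq, hg_pos⟩ := exists_affine_relation_nonpos_at ht q
  obtain ⟨y, hy, hgy, hle⟩ := exists_pos_forall_div_mul_le hw hg_pos
  have hyq : y ≠ q := by
    rintro rfl
    exact hgq.not_gt hgy
  let v : E → 𝕜 := fun x ↦ w x - w y / g y * g x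
  have hvy : v y = 0 := by simp [v, hgy.ne']
  refine ⟨y, hy, hyq, Finset.mem_convexHull'.2 ⟨v, ?_, ?_, ?_⟩⟩
  · exact fun x hx ↦ sub_nonneg.2 (hle x (Finset.mem_of_mem_erase hx))
  · calc
      ∑ x ∈ t.erase y, v x = ∑ x ∈ t, v x := Finset.sum_erase t hvy
      _ = ∑ x ∈ t, w x - w y / g y * ∑ x ∈ t, g x := by
        rw [Finset.sum_sub_distrib, Finset.mul_sum]
      _ = 1 := by rw [hw_sum, hg_sum, mul_zero, sub_zero]
  · calc
      ∑ x ∈ t.erase y, v x • x = ∑ x ∈ t, v x • x :=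
        Finset.sum_erase t (by rw [hvy, zero_smul])
      _ = ∑ x ∈ t, w x • x - (w y / g y) • ∑ x ∈ t, g x • x := by
        simp only [v, sub_smul, mul_smul, Finset.sum_sub_distrib, Finset.smul_sum]
      _ = p := by rw [hw_comb, hg_comb, smul_zero, sub_zero]

theorem exists_mem_affineIndependent_mem_convexHull {s : Set E} {q p : E} (hq : q ∈ s)
    (hp : p ∈ convexHull 𝕜 s) :
    ∃ t : Finset E, ↑t ⊆ s ∧ q ∈ t ∧ AffineIndependent 𝕜 ((↑) : t → E) ∧
      p ∈ convexHull 𝕜 (t : Set E) := by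
  classical
  let IsCarrier (t : Finset E) : Prop := ↑t ⊆ s ∧ q ∈ t ∧ p ∈ convexHull 𝕜 (t : Set E)
  have hcarrier : ∃ t, IsCarrier t := by
    simp only [convexHull_eq_union_convexHull_finite_subsets s, Set.mem_iUnion] at hp
    obtain ⟨t, hts, hpt⟩ := hp
    refine ⟨insert q t, ?_, Finset.mem_insert_self q t, convexHull_mono ?_ hpt⟩
    · rw [Finset.coe_insert]
      exact Set.insert_subset hq hts
    · exact Finset.coe_subset.2 (Finset.subset_insert q t)
  obtain ⟨t, htmin⟩ := exists_minimal_of_wellFoundedLT IsCarrier hcarrier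
  obtain ⟨hts, hqt, hpt⟩ := htmin.prop
  refine ⟨t, hts, hqt, ?_, hpt⟩
  by_contra ht
  obtain ⟨y, hy, hyq, hpy⟩ := exists_ne_mem_convexHull_erase ht q hpt
  have herase : IsCarrier (t.erase y) :=
    ⟨(Finset.coe_subset.2 (t.erase_subset y)).trans hts, Finset.mem_erase.2 ⟨hyq.symm, hqt⟩, hpy⟩
  exact htmin.not_prop_of_lt (Finset.erase_ssubset hy) herase

theorem triangulation_through_leftmost_general [DecidableEq E] {n : ℕ} {X : Finset E}
    (hdim : Module.finrank 𝕜 (vectorSpan 𝕜 (X : Set E)) ≤ n) (hX : n + 1 ≤ X.card)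
    {q p : E} (hq : q ∈ X) (hp : p ∈ convexHull 𝕜 (X : Set E)) :
    ∃ T ⊆ X.erase q, T.card = n ∧ p ∈ convexHull 𝕜 (insert q ↑T : Set E) := by
  have : FiniteDimensional 𝕜 (vectorSpan 𝕜 (X : Set E)) :=
    finiteDimensional_vectorSpan_of_finite 𝕜 X.finite_toSet
  obtain ⟨t, htX, hqt, ht, hpt⟩ := exists_mem_affineIndependent_mem_convexHull hq hp
  have hsmall : (t.erase q).card ≤ n := by
    have hcard := card_le_finrank_vectorSpan_add_one_of_affineIndependent htX ht
    rw [Finset.card_erase_of_mem hqt]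
    lia
  have hlarge : n ≤ (X.erase q).card := by
    rw [Finset.card_erase_of_mem hq]
    lia
  obtain ⟨T, htT, hTX, hT⟩ := Finset.exists_subsuperset_card_eq
    (Finset.erase_subset_erase q (Finset.coe_subset.1 htX)) hsmall hlarge
  have htT' : t ⊆ insert q T := Finset.subset_insert_iff.2 htT
  exact ⟨T, hTX, hT, convexHull_mono (by exact_mod_cast htT') hpt⟩

end LinearOrderedField

/-- Triangulation through a fixed vertex: let `X` be a finite set of at least
`d+1` points in `ℝ^d` in general position, let `q ∈ X` be a point minimizing the
first coordinate over `X`, and let `p` be a point in the convex hull of `X`.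
Then there are `d` points `q₁, …, q_d ∈ X \ {q}` such that `p` lies in the convex
hull of `{q, q₁, …, q_d}`. -/
theorem triangulation_through_leftmost (d : ℕ) (hd : 0 < d)
    (X : Finset (Fin d → ℝ)) (hX : d + 1 ≤ X.card)
    (hgp : InGeneralPosition d X) (q : Fin d → ℝ) (hq : q ∈ X)
    (hmin : ∀ x ∈ X, q ⟨0, hd⟩ ≤ x ⟨0, hd⟩)
    (p : Fin d → ℝ) (hp : p ∈ convexHull ℝ (↑X : Set (Fin d → ℝ))) :
    ∃ T ⊆ X.erase q, T.card = d ∧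
      p ∈ convexHull ℝ (insert q ↑T : Set (Fin d → ℝ)) := by
  have hdim : Module.finrank ℝ (vectorSpan ℝ (X : Set (Fin d → ℝ))) ≤ d :=
    (Submodule.finrank_le _).trans_eq (Module.finrank_fin_fun ℝ)
  exact triangulation_through_leftmost_general hdim hX hq hp
end
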